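/- arXiv:2601.01880 — 2 statements merged into one kernel-verified Lean document; each statement's English description precedes it below -/
import Mathlib

section
/- Let γ be a real-analytic function on [-2,2]^{d-1} and m ∈ ℕ. For all positive constants c_m and c_{m+1}, the Lebesgue measure of the set {y ∈ [-1,1]^{d-1} : 𝔇^m γ(y) ≤ c_m and 𝔇^{m+1} γ(y) ≥ c_{m+1}} is at most a constant (depending only on m, d, and γ) times c_m / c_{m+1}. -/
open MeasureTheory Set
open scoped ENNReal Topology

noncomputable section

/-- `𝔇^m γ(y)`: the (Euclidean) size of the array of all `m`-th order derivatives
of `γ` at `y`, realized as the norm of the `m`-th iterated derivative. -/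
def Dm (n m : ℕ) (γ : EuclideanSpace ℝ (Fin n) → ℝ) (y : EuclideanSpace ℝ (Fin n)) : ℝ :=
  ‖iteratedFDeriv ℝ m γ y‖

/-- One-dimensional estimate: if the `k+1`-st derivative never vanishes on an interval `I`, then
the part of `I` where `|f| ≤ a` and `|f'| ≥ b` has measure `≲ a / b`. -/
lemma one_dim (k : ℕ) : ∀ (f : ℕ → ℝ → ℝ) (I T : Set ℝ), I.OrdConnected → MeasurableSet T →
    (∀ j ≤ k, ∀ t ∈ I, HasDerivAt (f j) (f (j + 1) t) t) → (∀ t ∈ I, f (k + 1) t ≠ 0) →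
    ∀ a b : ℝ, 0 < a → 0 < b → (∀ t ∈ I ∩ T, |f 0 t| ≤ a ∧ b ≤ |f 1 t|) →
    volume (I ∩ T) ≤ 2 ^ k * ENNReal.ofReal (2 * a / b) := by
  have inj : ∀ (g g' : ℝ → ℝ) (I : Set ℝ), I.OrdConnected → (∀ t ∈ I, HasDerivAt g (g' t) t) →
      (∀ t ∈ I, g' t ≠ 0) → InjOn g I := by
    intro g g' I hI hd hne
    have key : ∀ x ∈ I, ∀ y ∈ I, x < y → g x ≠ g y := by
      intro x hx y hy hxy heq
      have hsub : Icc x y ⊆ I := hI.out hx hy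
      obtain ⟨c, hc, hc0⟩ := exists_hasDerivAt_eq_zero hxy
        (fun t ht => (hd t (hsub ht)).continuousAt.continuousWithinAt) heq
        (fun t ht => hd t (hsub (Ioo_subset_Icc_self ht)))
      exact hne c (hsub (Ioo_subset_Icc_self hc)) hc0
    intro x hx y hy hxy
    rcases lt_trichotomy x y with h | h | h
    · exact absurd hxy (key x hx y hy h)
    · exact h
    · exact absurd hxy.symm (key y hy x hx h)
  induction k with
  | zero =>
    intro f I T hI hT hd hne a b ha hb hab
    have hinj : InjOn (f 0) (I ∩ T) :=
      (inj (f 0) (f 1) I hI (hd 0 le_rfl) hne).mono inter_subset_left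
    have hm : MeasurableSet (I ∩ T) := hI.measurableSet.inter hT
    have h1 := lintegral_image_eq_lintegral_abs_deriv_mul (f := f 0) (f' := f 1) hm
      (fun t ht => (hd 0 le_rfl t ht.1).hasDerivWithinAt) hinj (fun _ => 1)
    have h2 : ENNReal.ofReal b * volume (I ∩ T) ≤ ENNReal.ofReal (2 * a) := by
      calc ENNReal.ofReal b * volume (I ∩ T) = ∫⁻ _ in I ∩ T, ENNReal.ofReal b := by simp
        _ ≤ ∫⁻ t in I ∩ T, ENNReal.ofReal |f 1 t| * 1 := by
          refine setLIntegral_mono' hm fun t ht => ?_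
          rw [mul_one]
          exact ENNReal.ofReal_le_ofReal (hab t ht).2
        _ = volume (f 0 '' (I ∩ T)) := by rw [← h1]; simp
        _ ≤ volume (Icc (-a) a) := by
          refine measure_mono ?_
          rintro _ ⟨t, ht, rfl⟩
          exact abs_le.1 (hab t ht).1
        _ = ENNReal.ofReal (2 * a) := by rw [Real.volume_Icc]; congr 1; ring
    rw [pow_zero, one_mul, ENNReal.ofReal_div_of_pos hb]
    rw [ENNReal.le_div_iff_mul_le (by simp [hb]) (by simp), mul_comm]
    exact h2
  | succ k ih =>
    intro f I T hI hT hd hne a b ha hb hab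
    have hinj := inj (f (k + 1)) (f (k + 2)) I hI (hd (k + 1) le_rfl) hne
    have hb2 : (2 : ℝ≥0∞) ^ (k + 1) * ENNReal.ofReal (2 * a / b) =
        2 ^ k * ENNReal.ofReal (2 * a / b) + 2 ^ k * ENNReal.ofReal (2 * a / b) := by ring
    by_cases hz : ∃ z ∈ I, f (k + 1) z = 0
    · obtain ⟨z, hzI, hz⟩ := hz
      have hsplit : I ∩ T ⊆ ((I ∩ Iio z) ∩ T ∪ (I ∩ Ioi z) ∩ T) ∪ {z} := by
        rintro t ⟨htI, htT⟩
        rcases lt_trichotomy t z with h | h | h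
        · exact Or.inl (Or.inl ⟨⟨htI, h⟩, htT⟩)
        · exact Or.inr h
        · exact Or.inl (Or.inr ⟨⟨htI, h⟩, htT⟩)
      have hl := ih f (I ∩ Iio z) T (hI.inter ordConnected_Iio) hT
        (fun j hj t ht => hd j (by omega) t ht.1)
        (fun t ht h0 => (ne_of_lt ht.2) (hinj ht.1 hzI (h0.trans hz.symm))) a b ha hb
        (fun t ht => hab t ⟨ht.1.1, ht.2⟩)
      have hr := ih f (I ∩ Ioi z) T (hI.inter ordConnected_Ioi) hT
        (fun j hj t ht => hd j (by omega) t ht.1)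
        (fun t ht h0 => (ne_of_gt ht.2) (hinj ht.1 hzI (h0.trans hz.symm))) a b ha hb
        (fun t ht => hab t ⟨ht.1.1, ht.2⟩)
      calc volume (I ∩ T) ≤ _ := measure_mono hsplit
        _ ≤ _ := measure_union_le _ _
        _ = volume ((I ∩ Iio z) ∩ T ∪ (I ∩ Ioi z) ∩ T) := by simp
        _ ≤ _ := measure_union_le _ _
        _ ≤ _ := add_le_add hl hr
        _ = _ := hb2.symm
    · push Not at hz
      refine (ih f I T hI hT (fun j hj => hd j (by omega)) hz a b ha hb hab).trans ?_
      rw [hb2]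
      exact le_self_add

/-- The local form of the estimate for the pair of functions `f`, `h`. -/
def LocB {n : ℕ} (p : EuclideanSpace ℝ (Fin n)) (f h : EuclideanSpace ℝ (Fin n) → ℝ) : Prop :=
  ∃ C > 0, ∃ U ∈ 𝓝 p, ∀ a b : ℝ, 0 < a → 0 < b →
    volume (U ∩ {y | f y ≤ a ∧ b ≤ h y}) ≤ ENNReal.ofReal (C * a / b)

lemma LocB.combine {n : ℕ} {ι : Type*} [Fintype ι] {p : EuclideanSpace ℝ (Fin n)}
    {f h : EuclideanSpace ℝ (Fin n) → ℝ} {fi hi : ι → EuclideanSpace ℝ (Fin n) → ℝ}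
    {A B : ℝ} (hA : 0 < A) (hB : 0 < B) (hl : ∀ i, LocB p (fi i) (hi i))
    (hfi : ∀ᶠ y in 𝓝 p, ∀ i, fi i y ≤ A * f y)
    (hhi : ∀ᶠ y in 𝓝 p, ∀ b > 0, b ≤ h y → ∃ i, B * b ≤ hi i y) : LocB p f h := by
  choose C hC U hU hm using hl
  refine ⟨(1 + ∑ i, C i) * (A / B), ?_, (⋂ i, U i) ∩ {y | (∀ i, fi i y ≤ A * f y) ∧
    ∀ b > 0, b ≤ h y → ∃ i, B * b ≤ hi i y}, ?_, ?_⟩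
  · have : 0 ≤ ∑ i, C i := Finset.sum_nonneg fun i _ => (hC i).le
    positivity
  · exact Filter.inter_mem (Filter.iInter_mem.2 hU) (hfi.and hhi)
  · intro a b ha hb
    have hAa : 0 < A * a := mul_pos hA ha
    have hBb : 0 < B * b := mul_pos hB hb
    calc _ ≤ volume (⋃ i, U i ∩ {y | fi i y ≤ A * a ∧ B * b ≤ hi i y}) := by
          refine measure_mono ?_
          rintro y ⟨⟨hyU, h1, h2⟩, hya, hyb⟩
          obtain ⟨i, hi⟩ := h2 b hb hyb
          refine mem_iUnion.2 ⟨i, mem_iInter.1 hyU i, (h1 i).trans ?_, hi⟩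
          gcongr
      _ ≤ ∑ i, volume (U i ∩ {y | fi i y ≤ A * a ∧ B * b ≤ hi i y}) :=
          measure_iUnion_fintype_le _ _
      _ ≤ ∑ i, ENNReal.ofReal (C i * (A * a) / (B * b)) :=
          Finset.sum_le_sum fun i _ => hm i _ _ hAa hBb
      _ = ENNReal.ofReal (∑ i, C i * (A * a) / (B * b)) :=
          (ENNReal.ofReal_sum_of_nonneg fun i _ => by have := hC i; positivity).symm
      _ ≤ _ := by
          refine ENNReal.ofReal_le_ofReal ?_
          rw [← Finset.sum_div, ← Finset.sum_mul]
          have : (1 + ∑ i, C i) * (A / B) * a / b = (1 + ∑ i, C i) * (A * a) / (B * b) := by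
            field_simp
          rw [this]
          gcongr
          linarith

/-- Fubini along a direction `v`. -/
lemma fubini_dir {n : ℕ} (p v : EuclideanSpace ℝ (Fin n)) (r : ℝ)
    (S : Set (EuclideanSpace ℝ (Fin n))) (hS : MeasurableSet S)
    (hSr : S ⊆ Metric.closedBall p r) (M : ℝ≥0∞)
    (hM : ∀ y, volume {t : ℝ | y + t • v ∈ S} ≤ M) :
    volume S ≤ M * volume (Metric.closedBall p (r + ‖v‖)) := by
  have hmeas : Measurable (fun q : EuclideanSpace ℝ (Fin n) × ℝ =>
      S.indicator (fun _ => (1 : ℝ≥0∞)) (q.1 + q.2 • v)) :=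
    (measurable_const.indicator hS).comp (by fun_prop)
  have h1 : ∫⁻ y, ∫⁻ t in Icc (0 : ℝ) 1, S.indicator (fun _ => (1 : ℝ≥0∞)) (y + t • v)
      = volume S := by
    rw [lintegral_lintegral_swap hmeas.aemeasurable]
    have : ∀ t : ℝ, ∫⁻ y, S.indicator (fun _ => (1 : ℝ≥0∞)) (y + t • v) = volume S := by
      intro t
      rw [lintegral_add_right_eq_self (fun y => S.indicator (fun _ => (1 : ℝ≥0∞)) y) (t • v)]
      simp [lintegral_indicator hS]
    simp [this]
  rw [← h1]
  calc _ ≤ ∫⁻ y, (Metric.closedBall p (r + ‖v‖)).indicator (fun _ => M) y := by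
        refine lintegral_mono fun y => ?_
        by_cases hy : y ∈ Metric.closedBall p (r + ‖v‖)
        · rw [indicator_of_mem hy]
          calc _ ≤ ∫⁻ t : ℝ, S.indicator (fun _ => (1 : ℝ≥0∞)) (y + t • v) :=
                setLIntegral_le_lintegral _ _
            _ = ∫⁻ t : ℝ, {t : ℝ | y + t • v ∈ S}.indicator (fun _ => (1 : ℝ≥0∞)) t := rfl
            _ = volume {t : ℝ | y + t • v ∈ S} := by
                rw [lintegral_indicator]
                · simp
                · exact hS.preimage (by fun_prop : Measurable fun t : ℝ => y + t • v)
            _ ≤ M := hM y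
        · rw [indicator_of_notMem hy]
          refine le_of_eq ?_
          rw [setLIntegral_congr_fun (g := fun _ => 0) measurableSet_Icc]
          · simp
          · intro t ht
            refine indicator_of_notMem ?_ _
            intro hmem
            apply hy
            have h2 := hSr hmem
            rw [Metric.mem_closedBall, dist_eq_norm] at h2 ⊢
            calc ‖y - p‖ = ‖(y + t • v - p) - t • v‖ := by congr 1; abel
              _ ≤ ‖y + t • v - p‖ + ‖t • v‖ := norm_sub_le _ _
              _ ≤ r + ‖v‖ := by
                gcongr
                rw [norm_smul, Real.norm_eq_abs, abs_of_nonneg ht.1]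
                exact mul_le_of_le_one_left (norm_nonneg _) ht.2
    _ = _ := by
        rw [lintegral_indicator Metric.isClosed_closedBall.measurableSet]
        simp

/-- Iterated directional derivatives. -/
def dirD {n : ℕ} (v : EuclideanSpace ℝ (Fin n)) (g : EuclideanSpace ℝ (Fin n) → ℝ) :
    ℕ → EuclideanSpace ℝ (Fin n) → ℝ
  | 0 => g
  | k + 1 => fun y => fderiv ℝ (dirD v g k) y v

lemma dirD_analytic {n : ℕ} (v : EuclideanSpace ℝ (Fin n)) {g : EuclideanSpace ℝ (Fin n) → ℝ}
    {y : EuclideanSpace ℝ (Fin n)} (hg : AnalyticAt ℝ g y) (k : ℕ) :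
    AnalyticAt ℝ (dirD v g k) y := by
  induction k with
  | zero => exact hg
  | succ k ih =>
    exact ((ContinuousLinearMap.apply ℝ ℝ v).analyticAt _).comp ih.fderiv

lemma dirD_hasDerivAt {n : ℕ} (v : EuclideanSpace ℝ (Fin n)) {g : EuclideanSpace ℝ (Fin n) → ℝ}
    {y : EuclideanSpace ℝ (Fin n)} {t : ℝ} (hg : AnalyticAt ℝ g (y + t • v)) (k : ℕ) :
    HasDerivAt (fun s : ℝ => dirD v g k (y + s • v)) (dirD v g (k + 1) (y + t • v)) t := by
  have h1 := (dirD_analytic v hg k).differentiableAt.hasFDerivAt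
  have h2 : HasDerivAt (fun s : ℝ => y + s • v) v t := by
    simpa using ((hasDerivAt_id t).smul_const v).const_add y
  exact h1.comp_hasDerivAt t h2

lemma locB_dir {n : ℕ} (p v : EuclideanSpace ℝ (Fin n)) (g : EuclideanSpace ℝ (Fin n) → ℝ)
    (hg : AnalyticAt ℝ g p) (k : ℕ) (hk : dirD v g (k + 1) p ≠ 0) :
    LocB p (fun y => |g y|) (fun y => |fderiv ℝ g y v|) := by
  have hev : ∀ᶠ y in 𝓝 p, AnalyticAt ℝ g y ∧ dirD v g (k + 1) y ≠ 0 :=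
    hg.eventually_analyticAt.and ((dirD_analytic v hg (k + 1)).continuousAt.eventually_ne hk)
  obtain ⟨r, hr, hball⟩ := Metric.nhds_basis_closedBall.eventually_iff.1 hev
  set V := volume (Metric.closedBall p (r + ‖v‖)) with hV
  have hVtop : V ≠ ⊤ := (isCompact_closedBall p (r + ‖v‖)).measure_lt_top.ne
  refine ⟨2 ^ k * 2 * (V.toReal + 1), by positivity, Metric.closedBall p r,
    Metric.closedBall_mem_nhds p hr, fun a b ha hb => ?_⟩
  have hc0 : ContinuousOn (fun y => |g y|) (Metric.closedBall p r) := fun y hy =>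
    (hball hy).1.continuousAt.abs.continuousWithinAt
  have hc1 : ContinuousOn (fun y => |fderiv ℝ g y v|) (Metric.closedBall p r) := fun y hy =>
    (dirD_analytic v (hball hy).1 1).continuousAt.abs.continuousWithinAt
  set S := Metric.closedBall p r ∩ {y | |g y| ≤ a ∧ b ≤ |fderiv ℝ g y v|} with hSdef
  have hS : MeasurableSet S := by
    have e : S = (Metric.closedBall p r ∩ (fun y => |g y|) ⁻¹' Iic a) ∩
        (Metric.closedBall p r ∩ (fun y => |fderiv ℝ g y v|) ⁻¹' Ici b) := by
      ext y
      simp only [hSdef, mem_inter_iff, mem_ofPred_eq, mem_preimage, mem_Iic, mem_Ici]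
      tauto
    rw [e]
    exact (hc0.preimage_isClosed_of_isClosed Metric.isClosed_closedBall
      isClosed_Iic).measurableSet.inter
      (hc1.preimage_isClosed_of_isClosed Metric.isClosed_closedBall isClosed_Ici).measurableSet
  have hM : ∀ y, volume {t : ℝ | y + t • v ∈ S} ≤ 2 ^ k * ENNReal.ofReal (2 * a / b) := by
    intro y
    have hI : {t : ℝ | y + t • v ∈ Metric.closedBall p r}.OrdConnected := by
      have h := (convex_closedBall p r).affine_preimage (AffineMap.lineMap (k := ℝ) y (y + v))
      have e : {t : ℝ | y + t • v ∈ Metric.closedBall p r} =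
          (AffineMap.lineMap (k := ℝ) y (y + v)) ⁻¹' Metric.closedBall p r := by
        ext t
        simp [AffineMap.lineMap_apply, add_comm]
      rw [e]
      exact h.ordConnected
    have h := one_dim k (fun j t => dirD v g j (y + t • v))
      {t : ℝ | y + t • v ∈ Metric.closedBall p r} {t : ℝ | y + t • v ∈ S} hI
      (hS.preimage (by fun_prop : Measurable fun t : ℝ => y + t • v))
      (fun j _ t ht => dirD_hasDerivAt v (hball ht).1 j) (fun t ht => (hball ht).2) a b ha hb
      (fun t ht => ht.2.2)
    refine (measure_mono ?_).trans h
    intro t ht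
    exact ⟨ht.1, ht⟩
  refine (fubini_dir p v r S hS inter_subset_left _ hM).trans ?_
  rw [← hV, ← ENNReal.ofReal_toReal hVtop]
  have h2 : (2 : ℝ≥0∞) ^ k = ENNReal.ofReal (2 ^ k) := by
    rw [ENNReal.ofReal_pow (by norm_num)]; simp
  rw [h2, ← ENNReal.ofReal_mul (by positivity), ← ENNReal.ofReal_mul (by positivity)]
  refine ENNReal.ofReal_le_ofReal ?_
  rw [ENNReal.toReal_ofReal (by positivity)]
  have : 2 ^ k * 2 * (V.toReal + 1) * a / b = 2 ^ k * (2 * a / b) * (V.toReal + 1) := by ring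
  rw [this]
  gcongr
  linarith

/-- If `g - g p` is nonzero at `p + v`, some directional derivative along `v` does not vanish. -/
lemma exists_dirD_ne {n : ℕ} (p v : EuclideanSpace ℝ (Fin n)) (g : EuclideanSpace ℝ (Fin n) → ℝ)
    (hg : ∀ t ∈ Icc (0 : ℝ) 1, AnalyticAt ℝ g (p + t • v)) (hv : g (p + v) ≠ g p) :
    ∃ k, dirD v g (k + 1) p ≠ 0 := by
  by_contra! hcon
  set φ : ℝ → ℝ := fun t => g (p + t • v) - g p with hφ
  have han : AnalyticOnNhd ℝ φ (Icc 0 1) := by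
    intro t ht
    refine AnalyticAt.sub ?_ analyticAt_const
    exact (hg t ht).fun_comp (f := fun t : ℝ => p + t • v) (by fun_prop)
  have h0 : (0 : ℝ) ∈ Icc (0 : ℝ) 1 := by simp
  have hg0 : AnalyticAt ℝ g p := by simpa using hg 0 h0
  have hit : ∀ k, iteratedDeriv (k + 1) φ =ᶠ[𝓝 0] fun t => dirD v g (k + 1) (p + t • v) := by
    have hcont : Filter.Tendsto (fun t : ℝ => p + t • v) (𝓝 0) (𝓝 p) := by
      have : Continuous fun t : ℝ => p + t • v := by fun_prop
      simpa using this.tendsto 0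
    have hana := hcont.eventually hg0.eventually_analyticAt
    intro k
    induction k with
    | zero =>
      filter_upwards [hana] with t ht
      rw [zero_add, iteratedDeriv_one]
      exact ((dirD_hasDerivAt v ht 0).sub_const _).deriv
    | succ k ih =>
      rw [iteratedDeriv_succ]
      refine ih.deriv.trans ?_
      filter_upwards [hana] with t ht
      exact (dirD_hasDerivAt v ht (k + 1)).deriv
  have hz : ∀ k, iteratedDeriv k φ 0 = 0 := by
    intro k
    cases k with
    | zero => simp [hφ]
    | succ k => rw [(hit k).eq_of_nhds]; simpa using hcon k
  have hord : analyticOrderAt φ 0 = ⊤ := by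
    refine ENat.eq_top_iff_forall_ge.2 fun k => ?_
    exact (natCast_le_analyticOrderAt_iff_iteratedDeriv_eq_zero (han 0 h0)).2 fun i _ => hz i
  have hev := analyticOrderAt_eq_top.1 hord
  have := han.eqOn_zero_of_preconnected_of_eventuallyEq_zero isPreconnected_Icc h0 hev
    (show (1 : ℝ) ∈ Icc (0 : ℝ) 1 by simp)
  apply hv
  simpa [hφ, sub_eq_zero] using this

lemma locB_scalar {n : ℕ} (p : EuclideanSpace ℝ (Fin n)) (g : EuclideanSpace ℝ (Fin n) → ℝ)
    (hg : AnalyticAt ℝ g p) : LocB p (fun y => |g y|) (fun y => ‖fderiv ℝ g y‖) := by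
  by_cases hc : ∀ᶠ y in 𝓝 p, g y = g p
  · refine ⟨1, one_pos, {y | fderiv ℝ g y = 0}, ?_, fun a b ha hb => ?_⟩
    · have h : g =ᶠ[𝓝 p] fun _ => g p := hc
      filter_upwards [h.fderiv (𝕜 := ℝ)] with y hy
      simp [hy]
    · have : {y | fderiv ℝ g y = 0} ∩ {y | |g y| ≤ a ∧ b ≤ ‖fderiv ℝ g y‖} = ∅ := by
        ext y
        simp only [mem_inter_iff, mem_ofPred_eq, mem_empty_iff_false, iff_false, not_and, not_le]
        intro h _
        simpa [h] using hb
      rw [this]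
      simp
  · obtain ⟨r, hr, hball⟩ := Metric.nhds_basis_ball.eventually_iff.1 hg.eventually_analyticAt
    have hfr : ∃ᶠ y in 𝓝 p, g y ≠ g p := Filter.not_eventually.1 hc
    obtain ⟨q, hq1, hq2⟩ := (hfr.and_eventually (Metric.ball_mem_nhds p hr)).exists
    have hW : ∀ᶠ y in 𝓝 q, g y ≠ g p ∧ y ∈ Metric.ball p r :=
      ((hball hq2).continuousAt.eventually_ne hq1).and (Metric.isOpen_ball.mem_nhds hq2)
    obtain ⟨ε, hε, hεW⟩ := Metric.nhds_basis_closedBall.eventually_iff.1 hW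
    have hdir : ∀ w, ‖w - (q - p)‖ ≤ ε →
        LocB p (fun y => |g y|) (fun y => |fderiv ℝ g y w|) := by
      intro w hw
      have hmem : p + w ∈ Metric.closedBall q ε := by
        rw [Metric.mem_closedBall, dist_eq_norm]
        have e : p + w - q = w - (q - p) := by abel
        rwa [e]
      obtain ⟨h1, h2⟩ := hεW hmem
      obtain ⟨k, hk⟩ := exists_dirD_ne p w g (fun t ht => hball (by
        rw [Metric.mem_ball, dist_eq_norm] at h2 ⊢
        rw [add_sub_cancel_left] at h2 ⊢
        rw [norm_smul, Real.norm_eq_abs, abs_of_nonneg ht.1]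
        exact (mul_le_of_le_one_left (norm_nonneg _) ht.2).trans_lt h2)) h1
      exact locB_dir p w g hg k hk
    let e : Fin n → EuclideanSpace ℝ (Fin n) := fun i => EuclideanSpace.single i 1
    let w : Option (Fin n) → EuclideanSpace ℝ (Fin n) := fun o =>
      o.elim (q - p) (fun i => (q - p) + ε • e i)
    refine LocB.combine (ι := Option (Fin n)) (A := 1) (B := ε / (2 * (n + 1)))
      (fi := fun _ y => |g y|) (hi := fun o y => |fderiv ℝ g y (w o)|) one_pos (by positivity)
      (fun o => hdir _ ?_) (by simp) (Filter.Eventually.of_forall fun y b hb hby => ?_)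
    · cases o with
      | none => simpa [w] using hε.le
      | some i => simp [w, e, norm_smul, abs_of_pos hε]
    · by_contra! hcon
      set L := fderiv ℝ g y
      have hLe : ∀ i, |L (e i)| ≤ b / (n + 1) := by
        intro i
        have h1 := hcon none
        have h2 := hcon (some i)
        have h3 : ε * L (e i) = L (w (some i)) - L (w none) := by simp [w]
        have h4 : ε * |L (e i)| ≤ 2 * (ε / (2 * (n + 1)) * b) := by
          rw [← abs_of_pos hε, ← abs_mul, abs_of_pos hε, h3]
          refine (abs_sub _ _).trans ?_
          linarith
        have h5 : 2 * (ε / (2 * (n + 1)) * b) = ε * (b / (n + 1)) := by field_simp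
        rw [h5] at h4
        exact le_of_mul_le_mul_left h4 hε
      have hL : ‖L‖ ≤ n * (b / (n + 1)) := by
        refine L.opNorm_le_bound (by positivity) fun x => ?_
        have hx : x = ∑ i, x i • e i := by
          ext j
          simp [e, Finset.sum_apply, Pi.single_apply]
        calc ‖L x‖ = ‖∑ i, x i * L (e i)‖ := by
              conv_lhs => rw [hx]
              simp
          _ ≤ ∑ i, ‖x i * L (e i)‖ := norm_sum_le _ _
          _ ≤ ∑ _i : Fin n, ‖x‖ * (b / (n + 1)) := by
              refine Finset.sum_le_sum fun i _ => ?_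
              rw [norm_mul]
              exact mul_le_mul (PiLp.norm_apply_le x i) (hLe i) (norm_nonneg _) (norm_nonneg _)
          _ = _ := by simp; ring
      have : (n : ℝ) * (b / (n + 1)) < b := by
        rw [← mul_div_assoc, div_lt_iff₀ (by positivity)]
        nlinarith
      linarith [hby]

lemma locB_vector {n : ℕ} {F : Type*} [NormedAddCommGroup F] [NormedSpace ℝ F]
    [FiniteDimensional ℝ F] (p : EuclideanSpace ℝ (Fin n)) (G : EuclideanSpace ℝ (Fin n) → F)
    (hG : AnalyticAt ℝ G p) : LocB p (fun y => ‖G y‖) (fun y => ‖fderiv ℝ G y‖) := by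
  let bs := Module.finBasis ℝ F
  let φ : Fin (Module.finrank ℝ F) → (F →L[ℝ] ℝ) := fun i => (bs.coord i).toContinuousLinearMap
  have hA : ∀ i, ‖φ i‖ ≤ 1 + ∑ i, ‖φ i‖ := fun i => by
    have := Finset.single_le_sum (f := fun i => ‖φ i‖) (fun i _ => norm_nonneg _)
      (Finset.mem_univ i)
    linarith
  have hA0 : 0 ≤ ∑ i, ‖φ i‖ := Finset.sum_nonneg fun i _ => norm_nonneg _
  have hB0 : 0 ≤ ∑ i, ‖bs i‖ := Finset.sum_nonneg fun i _ => norm_nonneg _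
  refine LocB.combine (ι := Fin (Module.finrank ℝ F)) (A := 1 + ∑ i, ‖φ i‖)
    (B := 1 / (1 + ∑ i, ‖bs i‖)) (fi := fun i y => |φ i (G y)|)
    (hi := fun i y => ‖fderiv ℝ (fun z => φ i (G z)) y‖) (by positivity) (by positivity)
    (fun i => locB_scalar p _ (((φ i).analyticAt _).comp hG))
    (Filter.Eventually.of_forall fun y i => ?_) ?_
  · exact ((φ i).le_opNorm (G y)).trans (by gcongr; exact hA i)
  · filter_upwards [hG.eventually_analyticAt] with y hy b hb hby
    by_contra! hcon
    set L := fderiv ℝ G y with hL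
    have hd : ∀ i, fderiv ℝ (fun z => φ i (G z)) y = (φ i).comp L := fun i =>
      ((φ i).hasFDerivAt.comp y hy.differentiableAt.hasFDerivAt).fderiv
    have hLn : ‖L‖ ≤ ∑ i, (1 / (1 + ∑ i, ‖bs i‖) * b) * ‖bs i‖ := by
      refine L.opNorm_le_bound (Finset.sum_nonneg fun i _ => by positivity) fun x => ?_
      have hx : L x = ∑ i, φ i (L x) • bs i := (bs.sum_repr (L x)).symm
      rw [hx, Finset.sum_mul]
      refine (norm_sum_le _ _).trans (Finset.sum_le_sum fun i _ => ?_)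
      rw [norm_smul, mul_right_comm]
      gcongr
      have h1 := ((φ i).comp L).le_opNorm x
      have h2 := hcon i
      rw [hd i] at h2
      exact h1.trans (by gcongr)
    rw [← Finset.mul_sum] at hLn
    have : 1 / (1 + ∑ i, ‖bs i‖) * b * ∑ i, ‖bs i‖ < b := by
      rw [one_div, inv_mul_eq_div, div_mul_eq_mul_div, div_lt_iff₀ (by positivity)]
      nlinarith
    linarith [hby]

lemma finDim_cmm (n m : ℕ) :
    FiniteDimensional ℝ (EuclideanSpace ℝ (Fin n) [×m]→L[ℝ] ℝ) :=
  Module.Finite.of_injective (ContinuousMultilinearMap.toMultilinearMapLinear (R' := ℝ) (A := ℝ))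
    ContinuousMultilinearMap.toMultilinearMap_injective

/-- Let `γ` be real-analytic on `[-2,2]^{d-1}` and `m ∈ ℕ`. For all
positive constants `c_m`, `c_{m+1}`, the Lebesgue measure of
`{y ∈ [-1,1]^{d-1} : 𝔇^m γ(y) ≤ c_m, 𝔇^{m+1} γ(y) ≥ c_{m+1}}` is at most a constant
(depending only on `m`, `d` and `γ`) times `c_m / c_{m+1}`. -/
theorem sublevel_derivative_measure_bound
    (n m : ℕ) (γ : EuclideanSpace ℝ (Fin n) → ℝ)
    (hγ : AnalyticOnNhd ℝ γ {y : EuclideanSpace ℝ (Fin n) | ∀ i, |y i| ≤ 2}) :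
    ∃ C > 0, ∀ cm cm1 : ℝ, 0 < cm → 0 < cm1 →
      volume {y : EuclideanSpace ℝ (Fin n) |
          (∀ i, |y i| ≤ 1) ∧ Dm n m γ y ≤ cm ∧ cm1 ≤ Dm n (m + 1) γ y} ≤
        ENNReal.ofReal (C * cm / cm1) := by
  have := finDim_cmm n m
  set K : Set (EuclideanSpace ℝ (Fin n)) := {y | ∀ i, |y i| ≤ 1} with hK
  have hKc : IsCompact K := by
    refine Metric.isCompact_of_isClosed_isBounded ?_ ?_
    · rw [hK, ofPred_forall]
      exact isClosed_iInter fun i => isClosed_le (by fun_prop) continuous_const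
    · refine (Metric.isBounded_closedBall (x := 0) (r := √n)).subset fun y hy => ?_
      rw [mem_closedBall_zero_iff, EuclideanSpace.norm_eq]
      refine Real.sqrt_le_sqrt ?_
      calc ∑ i, ‖y i‖ ^ 2 ≤ ∑ _i : Fin n, (1 : ℝ) :=
            Finset.sum_le_sum fun i _ => pow_le_one₀ (norm_nonneg _) (hy i)
        _ = n := by simp
  have key : ∃ C > 0, ∀ a b : ℝ, 0 < a → 0 < b →
      volume (K ∩ {y | Dm n m γ y ≤ a ∧ b ≤ Dm n (m + 1) γ y}) ≤ ENNReal.ofReal (C * a / b) := by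
    refine hKc.induction_on (p := fun S => ∃ C > 0, ∀ a b : ℝ, 0 < a → 0 < b →
      volume (S ∩ {y | Dm n m γ y ≤ a ∧ b ≤ Dm n (m + 1) γ y}) ≤ ENNReal.ofReal (C * a / b))
      ⟨1, one_pos, by simp⟩ ?_ ?_ ?_
    · rintro s t hst ⟨C, hC, h⟩
      exact ⟨C, hC, fun a b ha hb =>
        (measure_mono (inter_subset_inter_left _ hst)).trans (h a b ha hb)⟩
    · rintro s t ⟨C, hC, h⟩ ⟨C', hC', h'⟩
      refine ⟨C + C', by positivity, fun a b ha hb => ?_⟩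
      rw [union_inter_distrib_right]
      refine (measure_union_le _ _).trans ((add_le_add (h a b ha hb) (h' a b ha hb)).trans ?_)
      rw [← ENNReal.ofReal_add (by positivity) (by positivity)]
      refine ENNReal.ofReal_le_ofReal (le_of_eq ?_)
      ring
    · intro p hp
      have hpa : AnalyticAt ℝ (iteratedFDeriv ℝ m γ) p :=
        hγ.iteratedFDeriv m p fun i => (hp i).trans (by norm_num)
      obtain ⟨C, hC, U, hU, h⟩ := locB_vector p _ hpa
      refine ⟨U, mem_nhdsWithin_of_mem_nhds hU, C, hC, fun a b ha hb => ?_⟩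
      have := h a b ha hb
      simp only [norm_fderiv_iteratedFDeriv] at this
      exact this
  obtain ⟨C, hC, h⟩ := key
  exact ⟨C, hC, fun a b ha hb => h a b ha hb⟩
end
end

section
/- Let U ⊂ ℝ^{d-1} be open and γ : U → ℝ be real-analytic. Suppose γ(y₀) = 0 and ∇γ(y₀) = 0 at some point y₀ ∈ U. Then there exist a neighborhood V of y₀ and constants C₁, C₂ > 0 such that |γ(y)| ≤ C₁ |∇γ(y)| and |∇γ(y)| ≤ C₂ |D²γ(y)| for all y ∈ V; in particular |γ(y)| ≤ C₁C₂ |D²γ(y)| on V. -/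
open MeasureTheory Set
open scoped Topology


namespace Loj

open Filter

attribute [fun_prop] analyticAt_fst
attribute [fun_prop] analyticAt_snd

/-! ### Division by a coordinate -/

section Division

variable {V : Type*} [NormedAddCommGroup V] [NormedSpace ℝ V]

/-- the terms of the divided series -/
noncomputable def divTerm (P : V →L[ℝ] V) (e : V) (p : FormalMultilinearSeries ℝ V ℝ) (m : ℕ)
    (j : Fin (m + 1)) : ContinuousMultilinearMap ℝ (fun _ : Fin m => V) ℝ :=
  ((p (m + 1)).curryMid j e).compContinuousLinearMap
    (fun i => if i.castSucc < j then P else ContinuousLinearMap.id ℝ V)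

noncomputable def divSeries (P : V →L[ℝ] V) (e : V) (p : FormalMultilinearSeries ℝ V ℝ) :
    FormalMultilinearSeries ℝ V ℝ :=
  fun m => ∑ j : Fin (m + 1), divTerm P e p m j

lemma norm_divTerm_le (P : V →L[ℝ] V) (hP : ‖P‖ ≤ 1) (e : V) (p : FormalMultilinearSeries ℝ V ℝ)
    (m : ℕ) (j : Fin (m + 1)) : ‖divTerm P e p m j‖ ≤ ‖p (m + 1)‖ * ‖e‖ := by
  refine (ContinuousMultilinearMap.norm_compContinuousLinearMap_le _ _).trans ?_
  have h1 : ‖(p (m + 1)).curryMid j e‖ ≤ ‖p (m + 1)‖ * ‖e‖ := by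
    refine (ContinuousLinearMap.le_opNorm _ _).trans ?_
    rw [ContinuousMultilinearMap.norm_curryMid]
  have h2 : ∏ i : Fin m, ‖(if i.castSucc < j then P else ContinuousLinearMap.id ℝ V)‖ ≤ 1 := by
    refine Finset.prod_le_one (fun _ _ => norm_nonneg _) (fun i _ => ?_)
    split_ifs
    · exact hP
    · exact ContinuousLinearMap.norm_id_le
  calc _ ≤ (‖p (m + 1)‖ * ‖e‖) * 1 := by
        apply mul_le_mul h1 h2 (Finset.prod_nonneg fun _ _ => norm_nonneg _) (by positivity)
    _ = _ := mul_one _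

lemma divSeries_radius_pos (P : V →L[ℝ] V) (hP : ‖P‖ ≤ 1) (e : V)
    (p : FormalMultilinearSeries ℝ V ℝ) (hp : 0 < p.radius) : 0 < (divSeries P e p).radius := by
  obtain ⟨C, r, hC, hr, h⟩ := p.le_mul_pow_of_radius_pos hp
  have hr2 : (0 : ℝ) < 1 / (2 * r) := by positivity
  have : ((Real.toNNReal (1 / (2 * r)) : NNReal) : ENNReal) ≤ (divSeries P e p).radius := by
    refine FormalMultilinearSeries.le_radius_of_bound _ (C * r * ‖e‖) (fun n => ?_)
    rw [Real.coe_toNNReal _ hr2.le]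
    have h1 : ‖divSeries P e p n‖ ≤ (n + 1) * (‖p (n + 1)‖ * ‖e‖) := by
      refine (norm_sum_le _ _).trans ?_
      refine (Finset.sum_le_sum (fun j _ => norm_divTerm_le P hP e p n j)).trans ?_
      simp
    have h3 : ((n : ℝ) + 1) ≤ 2 ^ n := by
      exact_mod_cast Nat.succ_le_of_lt (Nat.lt_two_pow_self)
    calc ‖divSeries P e p n‖ * (1 / (2 * r)) ^ n
        ≤ ((2 ^ n) * ((C * r ^ (n + 1)) * ‖e‖)) * (1 / (2 * r)) ^ n := by
          gcongr
          refine h1.trans ?_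
          gcongr
          exact h _
      _ = C * r * ‖e‖ := by
          rw [div_pow, mul_pow, one_pow, pow_succ]; field_simp
  refine lt_of_lt_of_le ?_ this
  simpa using hr

lemma divTerm_apply (P : V →L[ℝ] V) (e : V) (l : V → ℝ) (hl : ∀ v, v = P v + l v • e)
    (p : FormalMultilinearSeries ℝ V ℝ) (m : ℕ) (j : Fin (m + 1)) (v : V) :
    l v * divTerm P e p m j (fun _ => v) =
      p (m + 1) (fun i => if (i : ℕ) < j then P v else v)
       - p (m + 1) (fun i => if (i : ℕ) < j + 1 then P v else v) := by
  set w : Fin (m + 1) → V := fun i => if (i : ℕ) < j then P v else v with hw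
  have e1 : (fun i : Fin (m+1) => if (i : ℕ) < j then P v else v) = Function.update w j v := by
    rw [← hw]; funext i
    by_cases h : i = j
    · subst h; simp [hw]
    · simp [h]
  have e2 : (fun i : Fin (m+1) => if (i : ℕ) < j + 1 then P v else v)
      = Function.update w j (P v) := by
    funext i
    by_cases h : i = j
    · subst h; simp
    · have : (i : ℕ) ≠ j := fun h' => h (Fin.ext h')
      simp only [h, hw, ne_eq, not_false_eq_true, Function.update_of_ne]
      congr 1
      simp only [eq_iff_iff]; omega
  have e3 : divTerm P e p m j (fun _ => v) = p (m + 1) (Function.update w j e) := by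
    simp only [divTerm, ContinuousMultilinearMap.compContinuousLinearMap_apply,
      ContinuousMultilinearMap.curryMid_apply]
    congr 1
    funext i
    refine Fin.succAboveCases j ?_ (fun k => ?_) i
    · simp
    · simp only [Fin.insertNth_apply_succAbove, ne_eq, Fin.succAbove_ne, not_false_eq_true,
        Function.update_of_ne, hw]
      have : (k.castSucc < j) ↔ ((j.succAbove k : Fin (m+1)) : ℕ) < j := by
        rw [← Fin.lt_def, Fin.succAbove_lt_iff_castSucc_lt]
      by_cases h : k.castSucc < j
      · rw [if_pos h, if_pos (this.1 h)]
      · rw [if_neg h, if_neg (fun h' => h (this.2 h'))]; rfl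
  rw [e3, e2]
  change _ = p (m + 1) w - _
  rw [show w = Function.update w j v from e1]
  simp only [Function.update_idem]
  rw [← ContinuousMultilinearMap.map_update_sub]
  rw [show v - P v = l v • e by nth_rewrite 1 [hl v]; simp]
  rw [ContinuousMultilinearMap.map_update_smul]; rfl

lemma divSeries_apply (P : V →L[ℝ] V) (e : V) (l : V → ℝ) (hl : ∀ v, v = P v + l v • e)
    (p : FormalMultilinearSeries ℝ V ℝ) (m : ℕ) (v : V) :
    l v * divSeries P e p m (fun _ => v) = p (m + 1) (fun _ => v) - p (m + 1) (fun _ => P v) := by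
  simp only [divSeries, sum_apply, Finset.mul_sum,
    divTerm_apply P e l hl]
  rw [Fin.sum_univ_eq_sum_range (fun j => p (m + 1) (fun i => if (i : ℕ) < j then P v else v)
       - p (m + 1) (fun i => if (i : ℕ) < j + 1 then P v else v)), Finset.sum_range_sub']
  have : ∀ i : Fin (m + 1), (i : ℕ) < m + 1 := fun i => i.2
  simp only [this, if_true, Nat.not_lt_zero, if_false]

theorem exists_div (P : V →L[ℝ] V) (hP : ‖P‖ ≤ 1) (e : V) (l : V → ℝ)
    (hl : ∀ v, v = P v + l v • e) (f : V → ℝ) (hf : AnalyticAt ℝ f 0) :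
    ∃ g : V → ℝ, AnalyticAt ℝ g 0 ∧ ∀ᶠ v in 𝓝 0, f v = f (P v) + l v * g v := by
  obtain ⟨p, hp⟩ := hf
  have hpos := divSeries_radius_pos P hP e p hp.radius_pos
  have hq := ((divSeries P e p).hasFPowerSeriesOnBall hpos).hasFPowerSeriesAt
  refine ⟨_, hq.analyticAt, ?_⟩
  have hPc : Tendsto P (𝓝 0) (𝓝 0) := by simpa using P.continuous.tendsto 0
  filter_upwards [hp.eventually_hasSum, hPc.eventually hp.eventually_hasSum,
    hq.eventually_hasSum] with v h1 h2 h3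
  rw [zero_add] at h1 h2 h3
  have h4 := h3.mul_left (l v)
  simp only [divSeries_apply P e l hl] at h4
  have h5 := h1.sub h2
  rw [← hasSum_nat_add_iff' 1] at h5
  have h6 := h4.unique h5
  have h7 : p 0 (fun _ => v) = p 0 (fun _ => P v) := congrArg _ (Subsingleton.elim _ _)
  simp [h7] at h6
  linarith

end Division

section Domain

variable {V : Type*} [NormedAddCommGroup V] [NormedSpace ℝ V]

/-- analytic germs that vanish along all small rays ... -/
lemma exists_ray (f : V → ℝ) (hf : AnalyticAt ℝ f 0)
    (h : ¬ ∀ᶠ v in 𝓝 0, f v = 0) : ∃ w : V, ¬ ∀ᶠ s in 𝓝 (0 : ℝ), f (s • w) = 0 := by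
  obtain ⟨r, hr, hball⟩ := Metric.eventually_nhds_iff_ball.1 hf.eventually_analyticAt
  have : ∃ w ∈ Metric.ball (0 : V) r, f w ≠ 0 := by
    by_contra hcon
    push Not at hcon
    exact h (Filter.mem_of_superset (Metric.ball_mem_nhds 0 hr) hcon)
  obtain ⟨w, hw, hfw⟩ := this
  refine ⟨w, fun hev => hfw ?_⟩
  have hconv : Convex ℝ ((fun s : ℝ => s • w) ⁻¹' Metric.ball (0 : V) r) :=
    (convex_ball _ _).is_linear_preimage ⟨fun a b => add_smul a b w, fun a b => by simp [mul_smul]⟩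
  have han : AnalyticOnNhd ℝ (fun s : ℝ => f (s • w))
      ((fun s : ℝ => s • w) ⁻¹' Metric.ball (0 : V) r) := by
    intro s hs
    have h1 : AnalyticAt ℝ (fun s : ℝ => s • w) s := by fun_prop
    exact AnalyticAt.fun_comp (f := fun s : ℝ => s • w) (hball _ hs) h1
  have := han.eqOn_zero_of_preconnected_of_eventuallyEq_zero hconv.isPreconnected
    (z₀ := 0) (by simpa using hr) hev (x := 1) (by simpa using hw)
  simpa using this

lemma germ_domain (f g : V → ℝ) (hf : AnalyticAt ℝ f 0) (hg : AnalyticAt ℝ g 0)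
    (h : ∀ᶠ v in 𝓝 0, f v * g v = 0) : (∀ᶠ v in 𝓝 0, f v = 0) ∨ (∀ᶠ v in 𝓝 0, g v = 0) := by
  by_contra hcon
  rw [not_or] at hcon
  obtain ⟨hf0, hg0⟩ := hcon
  obtain ⟨r, hr, hball⟩ := Metric.eventually_nhds_iff_ball.1
    (hf.eventually_analyticAt.and (hg.eventually_analyticAt.and h))
  have hcon : IsPreconnected (Metric.ball (0 : V) r) := (convex_ball _ _).isPreconnected
  have : ∃ w ∈ Metric.ball (0 : V) r, f w ≠ 0 := by
    by_contra hcon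
    push Not at hcon
    exact hf0 (Filter.mem_of_superset (Metric.ball_mem_nhds 0 hr) hcon)
  obtain ⟨w, hw, hfw⟩ := this
  have h1 : ∀ᶠ v in 𝓝 w, g v = 0 := by
    filter_upwards [(hball w hw).1.continuousAt.eventually_ne hfw,
      Metric.isOpen_ball.mem_nhds hw] with v hv hv2
    exact (mul_eq_zero.1 (hball v hv2).2.2).resolve_left hv
  have h2 := AnalyticOnNhd.eqOn_zero_of_preconnected_of_eventuallyEq_zero
    (fun v hv => (hball v hv).2.1) hcon hw h1
  exact hg0 (Filter.mem_of_superset (Metric.ball_mem_nhds 0 hr) h2)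

end Domain

section Taylor

variable {W : Type*} [NormedAddCommGroup W] [NormedSpace ℝ W]

lemma exists_div_fst (f : ℝ × W → ℝ) (hf : AnalyticAt ℝ f 0) :
    ∃ g : ℝ × W → ℝ, AnalyticAt ℝ g 0 ∧ ∀ᶠ v in 𝓝 0, f v = f (0, v.2) + v.1 * g v := by
  obtain ⟨g, hg, h⟩ := exists_div
    ((ContinuousLinearMap.inr ℝ ℝ W).comp (ContinuousLinearMap.snd ℝ ℝ W)) (by
      refine ContinuousLinearMap.opNorm_le_bound _ zero_le_one (fun v => ?_)
      simpa using norm_snd_le v) ((1, 0) : ℝ × W) (fun v => v.1) (by intro v; simp) f hf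
  exact ⟨g, hg, by simpa using h⟩

lemma expand (f : ℝ × W → ℝ) (hf : AnalyticAt ℝ f 0) (d : ℕ) :
    ∃ (a : ℕ → W → ℝ) (u : ℝ × W → ℝ), (∀ i, AnalyticAt ℝ (a i) 0) ∧ AnalyticAt ℝ u 0 ∧
      ∀ᶠ p in 𝓝 0, f p = (∑ i ∈ Finset.range d, a i p.2 * p.1 ^ i) + p.1 ^ d * u p := by
  induction d with
  | zero => exact ⟨fun _ _ => 0, f, fun _ => analyticAt_const, hf, by simp⟩
  | succ d ih =>
    obtain ⟨a, u, ha, hu, h⟩ := ih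
    obtain ⟨g, hg, h'⟩ := exists_div_fst u hu
    refine ⟨Function.update a d (fun t => u (0, t)), g, ?_, hg, ?_⟩
    · intro i
      by_cases hi : i = d
      · subst hi
        rw [Function.update_self]
        exact AnalyticAt.fun_comp (g := u) (f := fun t : W => ((0 : ℝ), t)) hu (by fun_prop)
      · rw [Function.update_of_ne hi]; exact ha i
    · filter_upwards [h, h'] with p h1 h2
      rw [h1, h2, Finset.sum_range_succ, Function.update_self]
      rw [Finset.sum_congr rfl (g := fun i => Function.update a d (fun t => u (0, t)) i p.2 * p.1 ^ i)]
      · ring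
      · intro i hi
        rw [Function.update_of_ne (Finset.mem_range.1 hi).ne]

lemma coeff_lt {G U : ℝ → ℝ} {d : ℕ} {c : ℕ → ℝ} (hU : AnalyticAt ℝ U 0)
    (h : ∀ᶠ y in 𝓝 0, G y = (∑ i ∈ Finset.range d, c i * y ^ i) + y ^ d * U y) {i : ℕ}
    (hi : i < d) : iteratedDeriv i G 0 = i.factorial * c i := by
  have h' : G =ᶠ[𝓝 0] fun y => (∑ i ∈ Finset.range d, c i * y ^ i) + y ^ d * U y := h
  rw [h'.iteratedDeriv_eq]
  have h1 : AnalyticAt ℝ (fun y : ℝ => ∑ i ∈ Finset.range d, c i * y ^ i) 0 :=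
    Finset.analyticAt_fun_sum _ fun i hi ↦ by fun_prop
  have h2 : AnalyticAt ℝ (fun y : ℝ => y ^ d * U y) 0 := by fun_prop
  rw [iteratedDeriv_fun_add h1.contDiffAt h2.contDiffAt]
  have h3 : iteratedDeriv i (fun y : ℝ => y ^ d * U y) 0 = 0 := by
    refine (natCast_le_analyticOrderAt_iff_iteratedDeriv_eq_zero h2).1 ?_ i hi
    exact (natCast_le_analyticOrderAt h2).2 ⟨U, hU, by simp⟩
  rw [h3, add_zero, iteratedDeriv_fun_sum (fun i _ => by fun_prop)]
  simp only [iteratedDeriv_const_mul_field, iteratedDeriv_fun_pow_zero]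
  simp [Finset.sum_ite_eq_of_mem _ _ _ (Finset.mem_range.mpr hi), mul_comm]

lemma coeff_eq {G U : ℝ → ℝ} {d : ℕ} {c : ℕ → ℝ} (hU : AnalyticAt ℝ U 0)
    (h : ∀ᶠ y in 𝓝 0, G y = (∑ i ∈ Finset.range d, c i * y ^ i) + y ^ d * U y) :
    iteratedDeriv d G 0 = d.factorial * U 0 := by
  obtain ⟨g, hg, h'⟩ := exists_div (0 : ℝ →L[ℝ] ℝ) (by simp) (1 : ℝ) (fun v => v) (by simp) U hU
  have := coeff_lt (d := d + 1) (i := d) (G := G) (c := Function.update c d (U 0)) hg (by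
    filter_upwards [h, h'] with y h1 h2
    rw [h1, h2, Finset.sum_range_succ, Function.update_self]
    rw [Finset.sum_congr rfl (g := fun i => Function.update c d (U 0) i * y ^ i)]
    · simp; ring
    · intro i hi
      rw [Function.update_of_ne (Finset.mem_range.1 hi).ne]) (Nat.lt_succ_self d)
  simpa using this

lemma tsch [CompleteSpace W] (f : ℝ × W → ℝ) (hf : AnalyticAt ℝ f 0) (d : ℕ)
    (hd : iteratedDeriv d (fun y => f (y, 0)) 0 ≠ 0)
    (hlow : ∀ i < d, iteratedDeriv i (fun y => f (y, 0)) 0 = 0) :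
    ∃ h : W → ℝ, AnalyticAt ℝ h 0 ∧ h 0 = 0 ∧ ∃ (a : ℕ → W → ℝ) (u : ℝ × W → ℝ),
      (∀ i, AnalyticAt ℝ (a i) 0) ∧ AnalyticAt ℝ u 0 ∧ u 0 ≠ 0 ∧ (∀ i < d, a i 0 = 0) ∧
      (∀ i, i + 1 = d → a i = 0) ∧
      ∀ᶠ p in 𝓝 0, f (p.1 + h p.2, p.2) =
        (∑ i ∈ Finset.range d, a i p.2 * p.1 ^ i) + p.1 ^ d * u p := by
  set g : ℝ → ℝ := fun y => f (y, 0) with hg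
  have hga : AnalyticAt ℝ g 0 :=
    AnalyticAt.fun_comp (g := f) (f := fun y : ℝ => (y, (0 : W))) hf (by fun_prop)
  set F : ℝ × (W × ℝ) → ℝ := fun q => f (q.1 + q.2.2, q.2.1) with hF
  have hFa : AnalyticAt ℝ F 0 := by
    refine AnalyticAt.fun_comp_of_eq (g := f) (f := fun q : ℝ × (W × ℝ) => (q.1 + q.2.2, q.2.1))
      hf (by fun_prop) (by simp)
  obtain ⟨A, U, hA, hU, hexp⟩ := expand F hFa d
  -- coefficients along the axis
  have hline : ∀ᶠ s : ℝ in 𝓝 0, ∀ᶠ y in 𝓝 0, F (y, 0, s) =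
      (∑ i ∈ Finset.range d, A i (0, s) * y ^ i) + y ^ d * U (y, 0, s) := by
    have h1 := hexp.eventually_nhds
    have h2 : Tendsto (fun s : ℝ => ((0 : ℝ), (0 : W), s)) (𝓝 0) (𝓝 0) := by
      have : Continuous (fun s : ℝ => ((0 : ℝ), (0 : W), s)) := by fun_prop
      exact this.tendsto' _ _ rfl
    filter_upwards [h2.eventually h1] with s hs
    have h3 : Tendsto (fun y : ℝ => (y, (0 : W), s)) (𝓝 0) (𝓝 (0, 0, s)) := by
      have : Continuous (fun y : ℝ => (y, (0 : W), s)) := by fun_prop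
      exact this.tendsto' _ _ rfl
    exact h3.eventually hs
  have hUline : ∀ᶠ s : ℝ in 𝓝 0, AnalyticAt ℝ (fun y : ℝ => U (y, 0, s)) 0 := by
    have h1 := hU.eventually_analyticAt
    have h2 : Tendsto (fun s : ℝ => ((0 : ℝ), (0 : W), s)) (𝓝 0) (𝓝 0) := by
      have : Continuous (fun s : ℝ => ((0 : ℝ), (0 : W), s)) := by fun_prop
      exact this.tendsto' _ _ rfl
    filter_upwards [h2.eventually h1] with s hs
    exact AnalyticAt.fun_comp (g := U) (f := fun y : ℝ => (y, (0 : W), s)) hs (by fun_prop)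
  have hco : ∀ᶠ s : ℝ in 𝓝 0, ∀ i < d, iteratedDeriv i g s = i.factorial * A i (0, s) := by
    filter_upwards [hline, hUline] with s h1 h2 i hi
    rw [← coeff_lt (c := fun i => A i (0, s)) h2 h1 hi]
    have : (fun y => F (y, 0, s)) = fun y => g (y + s) := by
      funext y; simp [hF, hg]
    rw [this, iteratedDeriv_comp_add_const]
    simp
  have hU0 : U 0 ≠ 0 := by
    have := coeff_eq (c := fun i => A i (0, 0)) hUline.self_of_nhds hline.self_of_nhds
    have h3 : (fun y => F (y, 0, 0)) = g := by funext y; simp [hF, hg]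
    rw [h3] at this
    intro h0
    apply hd
    rw [this]
    have : U (0, 0, 0) = 0 := h0
    rw [this, mul_zero]
  have hA0 : ∀ i < d, A i 0 = 0 := by
    intro i hi
    have h1 := hco.self_of_nhds i hi
    rw [hlow i hi] at h1
    have h2 : (i.factorial : ℝ) ≠ 0 := by positivity
    exact (mul_eq_zero.1 h1.symm).resolve_left h2
  -- solve
  obtain ⟨h, hh, hh0, hsol⟩ : ∃ h : W → ℝ, AnalyticAt ℝ h 0 ∧ h 0 = 0 ∧
      ∀ i, i + 1 = d → ∀ᶠ t in 𝓝 0, A i (t, h t) = 0 := by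
    rcases Nat.eq_zero_or_pos d with rfl | hdpos
    · exact ⟨fun _ => 0, analyticAt_const, rfl, by intro i hi; omega⟩
    obtain ⟨k, rfl⟩ : ∃ k, d = k + 1 := ⟨d - 1, by omega⟩
    have hcd : ContDiffAt ℝ (⊤ : WithTop ℕ∞) (A k) 0 := (hA k).contDiffAt
    set c := iteratedDeriv (k + 1) g 0 / k.factorial with hc
    have hcne : c ≠ 0 := div_ne_zero hd (by positivity)
    have hder : HasDerivAt (fun s : ℝ => A k (0, s)) c 0 := by
      have h1 : HasDerivAt (fun s => iteratedDeriv k g s / k.factorial) c 0 := by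
        apply HasDerivAt.div_const
        rw [iteratedDeriv_succ]
        have hit : AnalyticAt ℝ (iteratedDeriv k g) 0 := by
          rw [iteratedDeriv_eq_iterate]; exact AnalyticAt.iterated_deriv hga k
        exact hit.differentiableAt.hasDerivAt
      refine h1.congr_of_eventuallyEq ?_
      filter_upwards [hco] with s hs
      rw [hs k (Nat.lt_succ_self k)]
      field_simp
    have hinv : (fderiv ℝ (A k) 0 ∘L .inr ℝ W ℝ).IsInvertible := by
      refine ⟨ContinuousLinearEquiv.smulLeft (Units.mk0 c hcne), ?_⟩
      ext
      have h1 : HasFDerivAt (fun s : ℝ => A k (0, s)) (fderiv ℝ (A k) 0 ∘L .inr ℝ W ℝ) 0 := by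
        have h2 : HasFDerivAt (fun s : ℝ => ((0 : W), s)) (ContinuousLinearMap.inr ℝ W ℝ) 0 :=
          (ContinuousLinearMap.inr ℝ W ℝ).hasFDerivAt
        exact HasFDerivAt.comp (f := fun s : ℝ => ((0 : W), s)) 0
          ((hA k).differentiableAt.hasFDerivAt) h2
      have h3 := h1.hasDerivAt.unique hder
      simp at h3 ⊢
      rw [h3]
    refine ⟨hcd.implicitFunction (by simp) hinv, ?_, ?_, ?_⟩
    · exact (hcd.contDiffAt_implicitFunction (by simp) hinv).analyticAt
    · exact hcd.implicitFunction_apply_self (by simp) hinv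
    · intro i hi
      obtain rfl : i = k := by omega
      have := hcd.eventually_apply_implicitFunction (by simp) hinv
      filter_upwards [this] with t ht
      rw [ht, hA0 _ (Nat.lt_succ_self _)]
  refine ⟨h, hh, hh0, fun i => if i + 1 = d then 0 else fun t => A i (t, h t),
    fun p => U (p.1, p.2, h p.2), ?_, ?_, ?_, ?_, ?_, ?_⟩
  · intro i
    dsimp only
    split_ifs
    · exact analyticAt_const
    · exact AnalyticAt.fun_comp_of_eq (g := A i) (f := fun t : W => (t, h t)) (hA i)
        (by fun_prop) (by simp [hh0])
  · have : AnalyticAt ℝ (fun p : ℝ × W => h p.2) 0 :=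
      AnalyticAt.fun_comp (g := h) (f := fun p : ℝ × W => p.2) hh (by fun_prop)
    exact AnalyticAt.fun_comp_of_eq (g := U) (f := fun p : ℝ × W => (p.1, p.2, h p.2)) hU
        (by fun_prop) (by simp [hh0])
  · change U (0, 0, h 0) ≠ 0
    rw [hh0]; exact hU0
  · intro i hi
    dsimp only
    split_ifs
    · rfl
    · change A i (0, h 0) = 0
      rw [hh0]; exact hA0 i hi
  · intro i hi
    simp [hi]
  · have h1 : Tendsto (fun p : ℝ × W => (p.1, p.2, h p.2)) (𝓝 0) (𝓝 0) := by
      have h2 : ContinuousAt (fun p : ℝ × W => h p.2) 0 :=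
        ContinuousAt.comp (g := h) (f := fun p : ℝ × W => p.2) hh.continuousAt (by fun_prop)
      have h3 : ContinuousAt (fun p : ℝ × W => (p.1, p.2, h p.2)) 0 := by fun_prop
      have := h3.tendsto
      change Tendsto _ _ (𝓝 (0, 0, h 0)) at this
      rw [hh0] at this
      exact this
    have h4 : Tendsto (fun p : ℝ × W => p.2) (𝓝 0) (𝓝 0) := by
      exact continuous_snd.tendsto' _ _ rfl
    have h5 : ∀ᶠ p : ℝ × W in 𝓝 0, ∀ i ∈ Finset.range d, i + 1 = d → A i (p.2, h p.2) = 0 := by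
      rw [Filter.eventually_all_finset]
      intro i _
      by_cases hi : i + 1 = d
      · filter_upwards [h4.eventually (hsol i hi)] with p hp _ using hp
      · exact Eventually.of_forall fun p hp => absurd hp hi
    filter_upwards [h1.eventually hexp, h5] with p hp hp5
    simp only [hF] at hp
    rw [hp]
    congr 1
    refine Finset.sum_congr rfl (fun i hi => ?_)
    split_ifs with hid
    · rw [hp5 i hi hid]; rfl
    · rfl

end Taylor

section Monomials

variable {m : ℕ}

/-- the monomial `w ^ α` -/
def mon (α : Fin m → ℕ) (w : Fin m → ℝ) : ℝ := ∏ i, w i ^ α i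

@[fun_prop]
lemma analyticAt_coord (i : Fin m) (w : Fin m → ℝ) :
    AnalyticAt ℝ (fun w : Fin m → ℝ => w i) w :=
  (ContinuousLinearMap.proj (R := ℝ) (φ := fun _ : Fin m => ℝ) i).analyticAt w

@[fun_prop]
lemma analyticAt_mon (α : Fin m → ℕ) (w : Fin m → ℝ) : AnalyticAt ℝ (mon α) w := by
  unfold mon
  exact Finset.analyticAt_fun_prod _ fun i _ => by fun_prop

@[fun_prop]
lemma continuous_mon (α : Fin m → ℕ) : Continuous (mon α) := by
  unfold mon; fun_prop

@[simp] lemma mon_zero (w : Fin m → ℝ) : mon 0 w = 1 := by simp [mon]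

lemma mon_add (α β : Fin m → ℕ) (w : Fin m → ℝ) : mon (α + β) w = mon α w * mon β w := by
  simp [mon, pow_add, Finset.prod_mul_distrib]

lemma mon_smul (k : ℕ) (α : Fin m → ℕ) (w : Fin m → ℝ) : mon (k • α) w = mon α w ^ k := by
  simp [mon, mul_comm k, pow_mul, Finset.prod_pow]

@[simp] lemma mon_single (i : Fin m) (w : Fin m → ℝ) : mon (Pi.single i 1) w = w i := by
  unfold mon
  rw [Finset.prod_eq_single i]
  · simp
  · intro j _ hj; simp [hj]
  · simp

lemma mon_ne_zero (α : Fin m → ℕ) {w : Fin m → ℝ} (h : ∀ i, w i ≠ 0) : mon α w ≠ 0 :=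
  Finset.prod_ne_zero_iff.2 fun i _ => pow_ne_zero _ (h i)

lemma mon_at_zero {α : Fin m → ℕ} (h : α ≠ 0) : mon α 0 = 0 := by
  obtain ⟨i, hi⟩ := Function.ne_iff.1 h
  exact Finset.prod_eq_zero (Finset.mem_univ i) (by simpa using hi)

/-- germ at `0` of the form monomial times unit -/
def Mono (g : (Fin m → ℝ) → ℝ) : Prop :=
  ∃ (α : Fin m → ℕ) (u : (Fin m → ℝ) → ℝ), AnalyticAt ℝ u 0 ∧ u 0 ≠ 0 ∧
    ∀ᶠ w in 𝓝 0, g w = mon α w * u w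

lemma exists_div_coord (i : Fin m) (f : (Fin m → ℝ) → ℝ) (hf : AnalyticAt ℝ f 0) :
    ∃ g : (Fin m → ℝ) → ℝ, AnalyticAt ℝ g 0 ∧
      ∀ᶠ w in 𝓝 0, f w = f (Function.update w i 0) + w i * g w := by
  set P : (Fin m → ℝ) →L[ℝ] (Fin m → ℝ) := ContinuousLinearMap.pi
    (fun j => if j = i then 0 else ContinuousLinearMap.proj (R := ℝ) (φ := fun _ : Fin m => ℝ) j)
    with hP
  have hPa : ∀ w, P w = Function.update w i 0 := by
    intro w; funext j
    by_cases h : j = i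
    · subst h; simp [hP]
    · simp [hP, h]
  obtain ⟨g, hg, h⟩ := exists_div P (by
      refine ContinuousLinearMap.opNorm_le_bound _ zero_le_one (fun w => ?_)
      rw [hPa, one_mul, pi_norm_le_iff_of_nonneg (norm_nonneg _)]
      intro j
      by_cases h : j = i
      · subst h; simp
      · simpa [h] using norm_le_pi_norm w j) (Pi.single i 1) (fun w => w i) (by
      intro w; rw [hPa]; funext j
      by_cases h : j = i
      · subst h; simp
      · simp [h]) f hf
  exact ⟨g, hg, by simpa only [hPa] using h⟩

lemma analyticAt_update (i : Fin m) (w : Fin m → ℝ) :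
    AnalyticAt ℝ (fun w : Fin m → ℝ => Function.update w i 0) w := by
  rw [analyticAt_pi_iff]
  intro j
  by_cases h : j = i
  · subst h; simpa using analyticAt_const
  · simpa [h] using analyticAt_coord j w

lemma coord_not_zero_germ (i : Fin m) : ¬ ∀ᶠ w : Fin m → ℝ in 𝓝 0, w i = 0 := by
  intro h
  have h2 : Tendsto (fun s : ℝ => (fun _ : Fin m => s)) (𝓝 0) (𝓝 0) := by
    have : Continuous (fun s : ℝ => (fun _ : Fin m => s)) := by fun_prop
    exact this.tendsto' _ _ rfl
  have h3 : ∀ᶠ s in 𝓝[≠] (0 : ℝ), s = 0 := (h2.eventually h).filter_mono nhdsWithin_le_nhds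
  obtain ⟨s, h4, h5⟩ := (h3.and self_mem_nhdsWithin).exists
  exact h5 h4

lemma factor_aux (n : ℕ) : ∀ (α : Fin m → ℕ), ∑ i, α i = n → ∀ f g u : (Fin m → ℝ) → ℝ,
    AnalyticAt ℝ f 0 → AnalyticAt ℝ g 0 → AnalyticAt ℝ u 0 → u 0 ≠ 0 →
    (∀ᶠ w in 𝓝 0, f w * g w = mon α w * u w) → Mono f := by
  induction n with
  | zero =>
    intro α hα f g u hf hg hu hu0 h
    have : α = 0 := by
      funext i
      exact (Finset.sum_eq_zero_iff.1 hα) i (Finset.mem_univ i)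
    subst this
    refine ⟨0, f, hf, ?_, by simp⟩
    intro hf0
    have := h.self_of_nhds
    simp [hf0] at this
    exact hu0 this.symm
  | succ n ih =>
    intro α hα f g u hf hg hu hu0 h
    obtain ⟨i, hi⟩ : ∃ i, α i ≠ 0 := by
      by_contra hcon
      push Not at hcon
      simp [hcon] at hα
    set α' := Function.update α i (α i - 1) with hα'
    have e : α = α' + Pi.single i 1 := by
      funext j
      by_cases hj : j = i
      · subst hj; simp [hα']; omega
      · simp [hα', hj]
    have hs : ∑ j, α' j = n := by
      rw [e] at hα
      simp only [Pi.add_apply, Finset.sum_add_distrib] at hα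
      simp at hα
      exact hα
    have hup : Tendsto (fun w : Fin m → ℝ => Function.update w i 0) (𝓝 0) (𝓝 0) := by
      have := (analyticAt_update i 0).continuousAt.tendsto
      simpa using this
    have hfP : AnalyticAt ℝ (fun w => f (Function.update w i 0)) 0 :=
      AnalyticAt.fun_comp_of_eq hf (analyticAt_update i 0) (by simp)
    have hgP : AnalyticAt ℝ (fun w => g (Function.update w i 0)) 0 :=
      AnalyticAt.fun_comp_of_eq hg (analyticAt_update i 0) (by simp)
    have h0 : ∀ᶠ w in 𝓝 0, f (Function.update w i 0) * g (Function.update w i 0) = 0 := by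
      filter_upwards [hup.eventually h] with w hw
      rw [hw, e, mon_add, mon_single]
      simp
    rcases germ_domain _ _ hfP hgP h0 with h1 | h1
    · obtain ⟨f', hf', hdiv⟩ := exists_div_coord i f hf
      have h2 : ∀ᶠ w in 𝓝 0, w i * (f' w * g w - mon α' w * u w) = 0 := by
        filter_upwards [h, h1, hdiv] with w a1 a2 a3
        rw [a3, a2, e, mon_add, mon_single] at a1
        linear_combination a1
      have h3 := (germ_domain (fun w : Fin m → ℝ => w i) _ (by fun_prop) (by fun_prop) h2).resolve_left
        (coord_not_zero_germ i)
      obtain ⟨β, v, hv, hv0, hβ⟩ := ih α' hs f' g u hf' hg hu hu0 (by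
        filter_upwards [h3] with w hw using sub_eq_zero.1 hw)
      refine ⟨β + Pi.single i 1, v, hv, hv0, ?_⟩
      filter_upwards [hβ, h1, hdiv] with w a1 a2 a3
      rw [a3, a2, a1, mon_add, mon_single]; ring
    · obtain ⟨g', hg', hdiv⟩ := exists_div_coord i g hg
      have h2 : ∀ᶠ w in 𝓝 0, w i * (f w * g' w - mon α' w * u w) = 0 := by
        filter_upwards [h, h1, hdiv] with w a1 a2 a3
        rw [a3, a2, e, mon_add, mon_single] at a1
        linear_combination a1
      have h3 := (germ_domain (fun w : Fin m → ℝ => w i) _ (by fun_prop) (by fun_prop) h2).resolve_left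
        (coord_not_zero_germ i)
      exact ih α' hs f g' u hf hg' hu hu0 (by
        filter_upwards [h3] with w hw using sub_eq_zero.1 hw)

lemma Mono.of_mul {f g : (Fin m → ℝ) → ℝ} (hf : AnalyticAt ℝ f 0) (hg : AnalyticAt ℝ g 0)
    (h : Mono (fun w => f w * g w)) : Mono f := by
  obtain ⟨α, u, hu, hu0, h⟩ := h
  exact factor_aux _ α rfl f g u hf hg hu hu0 h

/-! comparability of exponents -/

def dot (c α : Fin m → ℕ) : ℕ := ∑ i, c i * α i

lemma dot_formula (α : Fin m → ℕ) (k l : Fin m) (N M : ℕ) :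
    dot (1 + N • Pi.single k 1 + M • Pi.single l 1) α = (∑ i, α i) + N * α k + M * α l := by
  simp only [dot, Pi.add_apply, Pi.smul_apply, add_mul, Finset.sum_add_distrib]
  simp [Pi.single_apply]

lemma pow_lim {p r : ℕ} {a b : ℝ → ℝ} {a0 b0 : ℝ} (ha : Tendsto a (𝓝[>] 0) (𝓝 a0))
    (hb : Tendsto b (𝓝[>] 0) (𝓝 b0)) (ha0 : a0 ≠ 0)
    (h : ∀ᶠ s in 𝓝[>] (0 : ℝ), s ^ p * a s = s ^ r * b s) : r ≤ p := by
  by_contra hlt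
  push Not at hlt
  have h1 : ∀ᶠ s in 𝓝[>] (0 : ℝ), a s = s ^ (r - p) * b s := by
    filter_upwards [h, self_mem_nhdsWithin] with s hs hpos
    have hpos : (0 : ℝ) < s := hpos
    have : s ^ p * (a s - s ^ (r - p) * b s) = 0 := by
      rw [mul_sub, hs, ← mul_assoc, ← pow_add, Nat.add_sub_cancel' hlt.le, sub_self]
    have := (mul_eq_zero.1 this).resolve_left (by positivity)
    linarith
  have h2 : Tendsto (fun s : ℝ => s ^ (r - p)) (𝓝[>] 0) (𝓝 0) := by
    have : Continuous (fun s : ℝ => s ^ (r - p)) := by fun_prop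
    exact (this.tendsto' 0 0 (by simp; omega)).mono_left nhdsWithin_le_nhds
  have h3 := h2.mul hb
  rw [zero_mul] at h3
  exact ha0 (tendsto_nhds_unique (ha.congr' h1) h3)

lemma key_order {α β γ : Fin m → ℕ} {u v w : (Fin m → ℝ) → ℝ} (hu : ContinuousAt u 0)
    (hv : ContinuousAt v 0) (hw : ContinuousAt w 0) (hu0 : u 0 ≠ 0)
    (h : ∀ᶠ t in 𝓝 0, mon α t * u t - mon β t * v t = mon γ t * w t)
    (c : Fin m → ℕ) (hc : ∀ i, c i ≠ 0) (hlt : dot c α < dot c β) :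
    dot c γ ≤ dot c α ∧ (w 0 ≠ 0 → dot c γ = dot c α) := by
  set ρ : ℝ → (Fin m → ℝ) := fun s i => s ^ c i with hρ
  have hρ0 : Tendsto ρ (𝓝[>] 0) (𝓝 0) := by
    have : Continuous ρ := by fun_prop
    exact (this.tendsto' 0 0 (by funext i; simp [hρ, hc i])).mono_left nhdsWithin_le_nhds
  have hmon : ∀ δ s, mon δ (ρ s) = s ^ dot c δ := by
    intro δ s
    simp [mon, hρ, dot, ← pow_mul, Finset.prod_pow_eq_pow_sum]
  have h1 := hρ0.eventually h
  simp only [hmon] at h1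
  have hu' := hu.tendsto.comp hρ0
  have hv' := hv.tendsto.comp hρ0
  have hw' := hw.tendsto.comp hρ0
  have h2 : Tendsto (fun s : ℝ => s ^ (dot c β - dot c α)) (𝓝[>] 0) (𝓝 0) := by
    have : Continuous (fun s : ℝ => s ^ (dot c β - dot c α)) := by fun_prop
    exact (this.tendsto' 0 0 (by simp; omega)).mono_left nhdsWithin_le_nhds
  have ha := hu'.sub (h2.mul hv')
  rw [zero_mul, sub_zero] at ha
  have h3 : ∀ᶠ s in 𝓝[>] (0 : ℝ), s ^ dot c α * ((u ∘ ρ) s - s ^ (dot c β - dot c α) * (v ∘ ρ) s)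
      = s ^ dot c γ * (w ∘ ρ) s := by
    filter_upwards [h1] with s hs
    rw [Function.comp, Function.comp, Function.comp, ← hs, mul_sub, ← mul_assoc, ← pow_add,
      Nat.add_sub_cancel' hlt.le]
  have h4 := pow_lim ha hw' hu0 h3
  exact ⟨h4, fun hw0 => le_antisymm h4 (pow_lim hw' ha hw0 (by
    filter_upwards [h3] with s hs using hs.symm))⟩

lemma key_order2 {α β γ : Fin m → ℕ} {u v w : (Fin m → ℝ) → ℝ} (hu : ContinuousAt u 0)
    (hv : ContinuousAt v 0) (hw : ContinuousAt w 0) (hu0 : u 0 ≠ 0) (hw0 : w 0 ≠ 0)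
    (h : ∀ᶠ t in 𝓝 0, mon α t * u t - mon β t * v t = mon γ t * w t)
    (k : Fin m) (hk : α k < β k) : γ k = α k ∧ ∑ i, γ i = ∑ i, α i := by
  have key : ∀ N, ∑ i, α i < N → ∑ i, γ i + N * γ k = ∑ i, α i + N * α k := by
    intro N hN
    have := (key_order hu hv hw hu0 h (1 + N • Pi.single k 1 + 0 • Pi.single k 1)
      (by intro i; simp) (by
        rw [dot_formula, dot_formula]
        have : N * (α k + 1) ≤ N * β k := Nat.mul_le_mul_left _ hk
        rw [mul_add] at this
        omega)).2 hw0
    rw [dot_formula, dot_formula] at this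
    omega
  have h1 := key (∑ i, α i + 1) (by omega)
  have h2 := key (∑ i, α i + 2) (by omega)
  generalize ∑ i, α i = S at *
  generalize ∑ i, γ i = R at *
  have e1 : (S + 2) * γ k = (S + 1) * γ k + γ k := by ring
  have e2 : (S + 2) * α k = (S + 1) * α k + α k := by ring
  rw [e1, e2] at h2
  have h3 : γ k = α k := by omega
  refine ⟨h3, ?_⟩
  rw [h3] at h1
  omega

lemma order_total {α β : Fin m → ℕ} {u v : (Fin m → ℝ) → ℝ} (hu : ContinuousAt u 0)
    (hv : ContinuousAt v 0) (hu0 : u 0 ≠ 0) (hv0 : v 0 ≠ 0)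
    (h : (∀ᶠ t in 𝓝 0, mon α t * u t - mon β t * v t = 0) ∨
      Mono (fun t => mon α t * u t - mon β t * v t)) : α ≤ β ∨ β ≤ α := by
  by_contra hcon
  push Not at hcon
  obtain ⟨h1, h2⟩ := hcon
  obtain ⟨l, hl⟩ : ∃ l, β l < α l := by
    by_contra hc; push Not at hc; exact h1 hc
  obtain ⟨k, hk⟩ : ∃ l, α l < β l := by
    by_contra hc; push Not at hc; exact h2 hc
  rcases h with h | ⟨γ, w, hw, hw0, h⟩
  · have := (key_order (γ := β) (w := 0) hu hv continuousAt_const hu0 (by simpa using h)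
      (1 + (∑ i, α i + 1) • Pi.single k 1 + 0 • Pi.single k 1)
      (by intro i; simp) (by
        rw [dot_formula, dot_formula]
        have : (∑ i, α i + 1) * (α k + 1) ≤ (∑ i, α i + 1) * β k := Nat.mul_le_mul_left _ hk
        rw [mul_add] at this
        omega)).1
    rw [dot_formula, dot_formula] at this
    have : (∑ i, α i + 1) * (α k + 1) ≤ (∑ i, α i + 1) * β k := Nat.mul_le_mul_left _ hk
    rw [mul_add] at this
    omega
  · have hwc := hw.continuousAt
    have h' : ∀ᶠ t in 𝓝 0, mon β t * v t - mon α t * u t = mon γ t * (-w) t := by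
      filter_upwards [h] with t ht
      rw [Pi.neg_apply]; linear_combination -ht
    have a1 := key_order2 hu hv hwc hu0 hw0 h k hk
    have a2 := key_order2 hv hu hwc.neg hv0 (by simpa using hw0) h' l hl
    have a3 := (key_order hv hu hwc.neg hv0 h'
      (1 + 1 • Pi.single k 1 + (β k + 1) • Pi.single l 1) (by intro i; simp) (by
        rw [dot_formula, dot_formula]
        have : (β k + 1) * (β l + 1) ≤ (β k + 1) * α l := Nat.mul_le_mul_left _ hl
        rw [mul_add] at this
        omega)).2 (by simpa using hw0)
    rw [dot_formula, dot_formula, a1.1, a2.1] at a3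
    omega

end Monomials

section GoodSection

/-- zero germ or monomial times unit -/
def ZM {m : ℕ} (h : (Fin m → ℝ) → ℝ) : Prop := (∀ᶠ v in 𝓝 0, h v = 0) ∨ Mono h

lemma Mono.congr {m : ℕ} {h h' : (Fin m → ℝ) → ℝ} (hh : Mono h) (e : ∀ᶠ v in 𝓝 0, h v = h' v) :
    Mono h' := by
  obtain ⟨α, u, hu, hu0, h1⟩ := hh
  refine ⟨α, u, hu, hu0, ?_⟩
  filter_upwards [h1, e] with w a b
  rw [← b, a]

lemma ZM.congr {m : ℕ} {h h' : (Fin m → ℝ) → ℝ} (hh : ZM h) (e : ∀ᶠ v in 𝓝 0, h v = h' v) :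
    ZM h' := by
  rcases hh with h1 | h1
  · left
    filter_upwards [h1, e] with w a b
    rw [← b, a]
  · right; exact h1.congr e

variable {V V' : Type*} [NormedAddCommGroup V] [NormedSpace ℝ V]
  [NormedAddCommGroup V'] [NormedSpace ℝ V']

/-- `z` can be uniformized along `𝓤` so that all `g i` become monomial -/
def GoodAll (𝓤 : Ultrafilter ℕ) (N : ℕ) {ι : Type} (z : ℕ → V) (g : ι → V → ℝ) : Prop :=
  ∃ m' ≤ N, ∃ (w : ℕ → Fin m' → ℝ) (φ : (Fin m' → ℝ) → V), Tendsto w 𝓤 (𝓝 0) ∧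
    AnalyticAt ℝ φ 0 ∧ φ 0 = 0 ∧ (∀ᶠ x in 𝓤, z x = φ (w x)) ∧ ∀ i, ZM (fun v => g i (φ v))

def Good (𝓤 : Ultrafilter ℕ) (N : ℕ) (z : ℕ → V) (g : V → ℝ) : Prop :=
  GoodAll 𝓤 N z (fun _ : Unit => g)

variable {𝓤 : Ultrafilter ℕ}

lemma tendsto_germ {φ : V' → V} (hφ : AnalyticAt ℝ φ 0) (h0 : φ 0 = 0) :
    Tendsto φ (𝓝 0) (𝓝 0) := by
  have := hφ.continuousAt.tendsto
  rwa [h0] at this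

lemma GoodAll.comp {ι : Type} {N : ℕ} {z : ℕ → V} {z' : ℕ → V'} {g : ι → V → ℝ}
    {g' : ι → V' → ℝ} (ψ : V' → V) (hψ : AnalyticAt ℝ ψ 0) (hψ0 : ψ 0 = 0)
    (hz : ∀ᶠ x in 𝓤, z x = ψ (z' x)) (hg : ∀ i, ∀ᶠ v in 𝓝 0, g' i v = g i (ψ v))
    (h : GoodAll 𝓤 N z' g') : GoodAll 𝓤 N z g := by
  obtain ⟨m', hm, w, φ, hw, hφ, hφ0, e, hZ⟩ := h
  refine ⟨m', hm, w, fun v => ψ (φ v), hw, AnalyticAt.fun_comp_of_eq hψ hφ hφ0, by simp [hφ0, hψ0],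
    ?_, fun i => (hZ i).congr ?_⟩
  · filter_upwards [hz, e] with x a b
    rw [a, b]
  · exact (tendsto_germ hφ hφ0).eventually (hg i)

lemma Good.comp {N : ℕ} {z : ℕ → V} {z' : ℕ → V'} {g : V → ℝ}
    {g' : V' → ℝ} (ψ : V' → V) (hψ : AnalyticAt ℝ ψ 0) (hψ0 : ψ 0 = 0)
    (hz : ∀ᶠ x in 𝓤, z x = ψ (z' x)) (hg : ∀ᶠ v in 𝓝 0, g' v = g (ψ v))
    (h : Good 𝓤 N z' g') : Good 𝓤 N z g :=
  GoodAll.comp ψ hψ hψ0 hz (fun _ => hg) h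

lemma GoodAll.mono {ι : Type} {N N' : ℕ} (hN : N ≤ N') {z : ℕ → V} {g : ι → V → ℝ}
    (h : GoodAll 𝓤 N z g) : GoodAll 𝓤 N' z g := by
  obtain ⟨m', hm, r⟩ := h
  exact ⟨m', hm.trans hN, r⟩

lemma Good.mono {N N' : ℕ} (hN : N ≤ N') {z : ℕ → V} {g : V → ℝ}
    (h : Good 𝓤 N z g) : Good 𝓤 N' z g := GoodAll.mono hN h

def UU (𝓤 : Ultrafilter ℕ) (m : ℕ) : Prop :=
  ∀ (z : ℕ → Fin m → ℝ), Tendsto z 𝓤 (𝓝 0) → ∀ g : (Fin m → ℝ) → ℝ, AnalyticAt ℝ g 0 →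
    Good 𝓤 m z g

lemma UU.good {m : ℕ} (hU : UU 𝓤 m) {z : ℕ → V} (z' : ℕ → Fin m → ℝ) (hz' : Tendsto z' 𝓤 (𝓝 0))
    (ψ : (Fin m → ℝ) → V) (hψ : AnalyticAt ℝ ψ 0) (hψ0 : ψ 0 = 0)
    (hz : ∀ᶠ x in 𝓤, z x = ψ (z' x)) {g : V → ℝ} (hg : AnalyticAt ℝ g 0) : Good 𝓤 m z g :=
  Good.comp ψ hψ hψ0 hz (Eventually.of_forall fun _ => rfl)
    (hU z' hz' _ (AnalyticAt.fun_comp_of_eq hg hψ hψ0))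

lemma drop_fst {m : ℕ} (hU : UU 𝓤 m) {x : ℕ → ℝ} {s : ℕ → Fin m → ℝ} (hs : Tendsto s 𝓤 (𝓝 0))
    (hx : ∀ᶠ n in 𝓤, x n = 0) {g : ℝ × (Fin m → ℝ) → ℝ} (hg : AnalyticAt ℝ g 0) :
    Good 𝓤 m (fun n => (x n, s n)) g :=
  hU.good s hs (fun v => (0, v)) (by fun_prop) rfl (by filter_upwards [hx] with n hn; rw [hn]) hg

lemma analyticAt_update_zero {m : ℕ} (i : Fin m) (w : Fin m → ℝ) :
    AnalyticAt ℝ (fun w : Fin m → ℝ => Function.update w i 0) w := analyticAt_update i w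

lemma drop_snd {m : ℕ} (hU : UU 𝓤 m) {x : ℕ → ℝ} {s : ℕ → Fin m → ℝ} (hx : Tendsto x 𝓤 (𝓝 0))
    (hs : Tendsto s 𝓤 (𝓝 0)) (k : Fin m)
    (hk : ∀ᶠ n in 𝓤, s n k = 0) {g : ℝ × (Fin m → ℝ) → ℝ} (hg : AnalyticAt ℝ g 0) :
    Good 𝓤 m (fun n => (x n, s n)) g := by
  refine hU.good (fun n => Function.update (s n) k (x n)) ?_
    (fun v => (v k, Function.update v k 0)) (by have := analyticAt_update k 0; fun_prop) (by simp) ?_ hg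
  · rw [tendsto_pi_nhds] at hs ⊢
    intro j
    by_cases h : j = k
    · subst h; simpa using hx
    · simpa [h] using hs j
  · filter_upwards [hk] with n hn
    ext1
    · simp
    · simp [← hn]

def unc (m : ℕ) (v : Fin (m + 1) → ℝ) : ℝ × (Fin m → ℝ) := (v 0, fun i => v i.succ)

lemma analyticAt_unc (m : ℕ) (v : Fin (m + 1) → ℝ) : AnalyticAt ℝ (unc m) v := by
  refine AnalyticAt.prod (by fun_prop) ?_
  exact AnalyticAt.pi fun i => by fun_prop

lemma tendsto_cons {m : ℕ} {x : ℕ → ℝ} {s : ℕ → Fin m → ℝ} (hx : Tendsto x 𝓤 (𝓝 0))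
    (hs : Tendsto s 𝓤 (𝓝 0)) :
    Tendsto (fun n => (Fin.cons (x n) (s n) : Fin (m + 1) → ℝ)) 𝓤 (𝓝 0) := by
  rw [tendsto_pi_nhds] at hs ⊢
  intro j
  refine Fin.cases ?_ (fun i => ?_) j
  · simpa using hx
  · simpa using hs i

lemma UU.good_prod {m : ℕ} (hU : UU 𝓤 (m + 1)) {x : ℕ → ℝ} {s : ℕ → Fin m → ℝ}
    (hx : Tendsto x 𝓤 (𝓝 0)) (hs : Tendsto s 𝓤 (𝓝 0)) {g : ℝ × (Fin m → ℝ) → ℝ}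
    (hg : AnalyticAt ℝ g 0) : Good 𝓤 (m + 1) (fun n => (x n, s n)) g :=
  hU.good (fun n => Fin.cons (x n) (s n)) (tendsto_cons hx hs) (unc m) (analyticAt_unc m 0) rfl
    (by simp [unc]) hg

lemma good_of_ZM {m : ℕ} {x : ℕ → ℝ} {s : ℕ → Fin m → ℝ}
    (hx : Tendsto x 𝓤 (𝓝 0)) (hs : Tendsto s 𝓤 (𝓝 0)) {g : ℝ × (Fin m → ℝ) → ℝ}
    (h : ZM (fun v => g (unc m v))) : Good 𝓤 (m + 1) (fun n => (x n, s n)) g :=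
  ⟨m + 1, le_rfl, fun n => Fin.cons (x n) (s n), unc m, tendsto_cons hx hs, analyticAt_unc m 0, rfl,
    by simp [unc], fun _ => h⟩

lemma good_of_zero {m : ℕ} {x : ℕ → ℝ} {s : ℕ → Fin m → ℝ}
    (hx : Tendsto x 𝓤 (𝓝 0)) (hs : Tendsto s 𝓤 (𝓝 0)) {g : ℝ × (Fin m → ℝ) → ℝ}
    (h : ∀ᶠ p in 𝓝 0, g p = 0) : Good 𝓤 (m + 1) (fun n => (x n, s n)) g :=
  good_of_ZM hx hs (Or.inl ((tendsto_germ (analyticAt_unc m 0) rfl).eventually h))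

lemma good_of_mono {m : ℕ} {x : ℕ → ℝ} {s : ℕ → Fin m → ℝ}
    (hx : Tendsto x 𝓤 (𝓝 0)) (hs : Tendsto s 𝓤 (𝓝 0)) {g F : ℝ × (Fin m → ℝ) → ℝ}
    (a : ℕ) (β : Fin m → ℕ) (hF : AnalyticAt ℝ F 0) (hF0 : F 0 ≠ 0)
    (h : ∀ᶠ p in 𝓝 0, g p = p.1 ^ a * mon β p.2 * F p) : Good 𝓤 (m + 1) (fun n => (x n, s n)) g := by
  refine good_of_ZM hx hs (Or.inr ⟨Fin.cons a β, fun v => F (unc m v),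
    AnalyticAt.fun_comp_of_eq hF (analyticAt_unc m 0) rfl, hF0, ?_⟩)
  filter_upwards [(tendsto_germ (analyticAt_unc m 0) rfl).eventually h] with v hv
  rw [hv]
  simp [mon, unc, Fin.prod_univ_succ]

/-! several functions -/

lemma germ_domain_prod {ι : Type*} (S : Finset ι) (f : ι → V → ℝ) (hf : ∀ i ∈ S, AnalyticAt ℝ (f i) 0)
    (h : ∀ᶠ v in 𝓝 0, ∏ i ∈ S, f i v = 0) : ∃ i ∈ S, ∀ᶠ v in 𝓝 0, f i v = 0 := by
  classical
  induction S using Finset.induction_on with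
  | empty =>
    have := h.self_of_nhds
    simp at this
  | insert i S hi ih =>
    simp only [Finset.prod_insert hi] at h
    rcases germ_domain _ _ (hf i (by simp))
      (Finset.analyticAt_fun_prod S fun j hj => hf j (by simp [hj])) h with h1 | h1
    · exact ⟨i, by simp, h1⟩
    · obtain ⟨j, hj, h2⟩ := ih (fun j hj => hf j (by simp [hj])) h1
      exact ⟨j, by simp [hj], h2⟩

open Classical in
lemma goodAll_aux {ι : Type} [Fintype ι] (M : ℕ) (hU : ∀ k ≤ M, UU 𝓤 k) (n : ℕ) : ∀ m ≤ M,
    ∀ (z : ℕ → Fin m → ℝ), Tendsto z 𝓤 (𝓝 0) → ∀ g : ι → (Fin m → ℝ) → ℝ,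
    (∀ i, AnalyticAt ℝ (g i) 0) →
    (Finset.univ.filter fun i => ¬ ∀ᶠ v in 𝓝 0, g i v = 0).card = n → GoodAll 𝓤 m z g := by
  induction n using Nat.strong_induction_on with
  | _ n ih =>
  intro m hm z hz g hg hn
  set S := Finset.univ.filter fun i => ¬ ∀ᶠ v in 𝓝 0, g i v = 0 with hS
  have hP : AnalyticAt ℝ (fun v => ∏ i ∈ S, g i v) 0 := Finset.analyticAt_fun_prod _ fun i _ => hg i
  obtain ⟨m', hm', w, φ, hw, hφ, hφ0, e, hZ⟩ := hU m hm z hz _ hP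
  have hgφ : ∀ i, AnalyticAt ℝ (fun v => g i (φ v)) 0 := fun i =>
    AnalyticAt.fun_comp_of_eq (hg i) hφ hφ0
  have hzero : ∀ i, i ∉ S → ∀ᶠ v in 𝓝 0, g i (φ v) = 0 := by
    intro i hi
    simp only [hS, Finset.mem_filter, Finset.mem_univ, true_and, not_not] at hi
    exact (tendsto_germ hφ hφ0).eventually hi
  rcases hZ () with h | h
  · obtain ⟨i, hi, h1⟩ := germ_domain_prod S (fun i v => g i (φ v)) (fun i _ => hgφ i) h
    have hlt : (Finset.univ.filter fun i => ¬ ∀ᶠ v in 𝓝 0, g i (φ v) = 0).card < n := by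
      rw [← hn]
      refine Finset.card_lt_card ?_
      rw [Finset.ssubset_iff_of_subset]
      · exact ⟨i, hi, by simpa using h1⟩
      · intro j hj
        by_contra hj'
        simp only [Finset.mem_filter, Finset.mem_univ, true_and] at hj
        exact hj (hzero j hj')
    have := ih _ hlt m' (hm'.trans hm) w hw (fun i v => g i (φ v)) hgφ rfl
    exact (this.mono hm').comp φ hφ hφ0 e (fun i => Eventually.of_forall fun _ => rfl)
  · refine ⟨m', hm', w, φ, hw, hφ, hφ0, e, fun i => ?_⟩
    by_cases hi : i ∈ S
    · right
      refine Mono.of_mul (g := fun v => ∏ j ∈ S.erase i, g j (φ v)) (hgφ i)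
        (Finset.analyticAt_fun_prod _ fun i _ => hgφ i) ?_
      refine h.congr (Eventually.of_forall fun v => ?_)
      exact (Finset.mul_prod_erase S (fun j => g j (φ v)) hi).symm
    · left; exact hzero i hi

lemma goodAll {ι : Type} [Fintype ι] {m : ℕ} (hU : ∀ k ≤ m, UU 𝓤 k)
    (z : ℕ → Fin m → ℝ) (hz : Tendsto z 𝓤 (𝓝 0)) (g : ι → (Fin m → ℝ) → ℝ)
    (hg : ∀ i, AnalyticAt ℝ (g i) 0) : GoodAll 𝓤 m z g :=
  goodAll_aux m hU _ m le_rfl z hz g hg rfl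

/-- an ultrafilter limit exists or the values go to infinity -/
lemma ultra_alt (y : ℕ → ℝ) : (∃ c, Tendsto y 𝓤 (𝓝 c)) ∨ Tendsto (fun n => (y n)⁻¹) 𝓤 (𝓝 0) := by
  by_cases h : ∃ R : ℝ, ∀ᶠ n in 𝓤, |y n| ≤ R
  · left
    obtain ⟨R, hR⟩ := h
    have hc : IsCompact (Set.Icc (-R) R) := isCompact_Icc
    obtain ⟨c, -, hc⟩ := hc.ultrafilter_le_nhds (𝓤.map y) (by
      rw [Ultrafilter.coe_map, le_principal_iff, mem_map]
      filter_upwards [hR] with n hn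
      exact abs_le.1 hn)
    exact ⟨c, hc⟩
  · right
    push Not at h
    rw [Metric.tendsto_nhds]
    intro ε hε
    have h1 := h ε⁻¹
    filter_upwards [h1] with n hn
    rw [dist_zero_right, norm_inv, Real.norm_eq_abs]
    exact inv_lt_of_inv_lt₀ hε hn

end GoodSection

section Toric

variable {𝓤 : Ultrafilter ℕ} {m : ℕ}

lemma mon_update (β : Fin m → ℕ) (s : Fin m → ℝ) (i : Fin m) (y : ℝ) :
    mon β (Function.update s i y) = y ^ β i * mon (Function.update β i 0) s := by
  unfold mon
  rw [← Finset.mul_prod_erase _ _ (Finset.mem_univ i),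
    ← Finset.mul_prod_erase _ (fun j => s j ^ _) (Finset.mem_univ i)]
  simp only [Function.update_self, pow_zero, one_mul]
  congr 1
  refine Finset.prod_congr rfl fun j hj => ?_
  have : j ≠ i := Finset.ne_of_mem_erase hj
  simp [this]

lemma mon_split (β : Fin m → ℕ) (s : Fin m → ℝ) (i : Fin m) :
    mon β s = s i ^ β i * mon (Function.update β i 0) s := by
  rw [← mon_update, Function.update_eq_self]

lemma analyticAt_update_fun {V : Type*} [NormedAddCommGroup V] [NormedSpace ℝ V]
    (i : Fin m) {f : V → Fin m → ℝ} {g : V → ℝ} {v : V} (hf : AnalyticAt ℝ f v)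
    (hg : AnalyticAt ℝ g v) : AnalyticAt ℝ (fun w => Function.update (f w) i (g w)) v := by
  rw [analyticAt_pi_iff] at hf ⊢
  intro j
  by_cases h : j = i
  · subst h; simpa using hg
  · simpa [h] using hf j

lemma tendsto_update {s : ℕ → Fin m → ℝ} {y : ℕ → ℝ} (i : Fin m) (hs : Tendsto s 𝓤 (𝓝 0))
    (hy : Tendsto y 𝓤 (𝓝 0)) : Tendsto (fun n => Function.update (s n) i (y n)) 𝓤 (𝓝 0) := by
  rw [tendsto_pi_nhds] at hs ⊢
  intro j
  by_cases h : j = i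
  · subst h; simpa using hy
  · simpa [h] using hs j

lemma toric (hU : UU 𝓤 m) (n : ℕ) : ∀ (α : Fin m → ℕ), ∑ i, α i = n → ∀ (a : ℕ) (β : Fin m → ℕ)
    (x : ℕ → ℝ) (s : ℕ → Fin m → ℝ), Tendsto x 𝓤 (𝓝 0) → Tendsto s 𝓤 (𝓝 0) →
    Tendsto (fun k => mon α (s k) / x k) 𝓤 (𝓝 0) →
    ∀ (h : ℝ × (Fin m → ℝ) → ℝ) (F : ℝ × (Fin m → ℝ) × ℝ → ℝ), AnalyticAt ℝ h 0 →
    AnalyticAt ℝ F 0 → F 0 ≠ 0 →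
    (∀ᶠ q : ℝ × (Fin m → ℝ) × ℝ in 𝓝 0, q.1 * q.2.2 = mon α q.2.1 →
      h (q.1, q.2.1) = q.1 ^ a * mon β q.2.1 * F q) →
    Good 𝓤 (m + 1) (fun k => (x k, s k)) h := by
  induction n with
  | zero =>
    intro α hα a β x s hx hs hr h F hh hF hF0 hq
    have : α = 0 := by
      funext i
      exact (Finset.sum_eq_zero_iff.1 hα) i (Finset.mem_univ i)
    subst this
    by_cases hx0 : ∀ᶠ k in 𝓤, x k = 0
    · exact (drop_fst hU hs hx0 hh).mono (Nat.le_succ m)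
    rw [← Ultrafilter.eventually_not] at hx0
    exfalso
    have h1 := hr.mul hx
    have h2 : Tendsto (fun k => mon 0 (s k) / x k * x k) 𝓤 (𝓝 1) := by
      refine tendsto_const_nhds.congr' ?_
      filter_upwards [hx0] with k hk
      rw [mon_zero]; field_simp
    have := tendsto_nhds_unique h1 h2
    simp at this
  | succ n ih =>
    intro α hα a β x s hx hs hr h F hh hF hF0 hq
    by_cases hx0 : ∀ᶠ k in 𝓤, x k = 0
    · exact (drop_fst hU hs hx0 hh).mono (Nat.le_succ m)
    rw [← Ultrafilter.eventually_not] at hx0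
    obtain ⟨i, hi⟩ : ∃ i, α i ≠ 0 := by
      by_contra hcon
      push Not at hcon
      simp [hcon] at hα
    by_cases hsi : ∀ᶠ k in 𝓤, s k i = 0
    · exact (drop_snd hU hx hs i hsi hh).mono (Nat.le_succ m)
    rw [← Ultrafilter.eventually_not] at hsi
    set α' := Function.update α i (α i - 1) with hα'
    have e : α = α' + Pi.single i 1 := by
      funext j
      by_cases hj : j = i
      · subst hj; simp [hα']; omega
      · simp [hα', hj]
    have hs' : ∑ j, α' j = n := by
      rw [e] at hα
      simp only [Pi.add_apply, Finset.sum_add_distrib] at hα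
      simp at hα
      exact hα
    rcases ultra_alt (𝓤 := 𝓤) (fun k => s k i / x k) with ⟨c, hc⟩ | hc
    · have hy : Tendsto (fun k => s k i / x k - c) 𝓤 (𝓝 0) := by
        simpa using hc.sub_const c
      set s' : ℕ → Fin m → ℝ := fun k => Function.update (s k) i (s k i / x k - c) with hs'def
      have hs't : Tendsto s' 𝓤 (𝓝 0) := tendsto_update i hs hy
      set σ : ℝ × (Fin m → ℝ) → (Fin m → ℝ) :=
        fun p => Function.update p.2 i (p.1 * (c + p.2 i)) with hσ
      have hσa : AnalyticAt ℝ σ 0 := analyticAt_update_fun i (by fun_prop) (by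
        have : AnalyticAt ℝ (fun p : ℝ × (Fin m → ℝ) => p.2 i) 0 :=
          AnalyticAt.fun_comp_of_eq (analyticAt_coord i 0) analyticAt_snd rfl
        fun_prop)
      have hσ0 : σ 0 = 0 := by simp [hσ]
      have hcoord : AnalyticAt ℝ (fun p : ℝ × (Fin m → ℝ) => p.2 i) 0 :=
          AnalyticAt.fun_comp_of_eq (analyticAt_coord i 0) analyticAt_snd rfl
      set r : ℝ × (Fin m → ℝ) → ℝ := fun p =>
        p.1 ^ (α i - 1) * (c + p.2 i) ^ α i * mon (Function.update α i 0) p.2 with hrdef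
      have hra : AnalyticAt ℝ r 0 := by
        have : AnalyticAt ℝ (fun p : ℝ × (Fin m → ℝ) => mon (Function.update α i 0) p.2) 0 :=
          AnalyticAt.fun_comp_of_eq (analyticAt_mon _ 0) analyticAt_snd rfl
        fun_prop
      have hrel : ∀ p, p.1 * r p = mon α (σ p) := by
        intro p
        rw [hσ, mon_update, hrdef, mul_pow]
        conv_rhs => rw [show α i = (α i - 1) + 1 by omega, pow_succ p.1]
        rw [show α i - 1 + 1 = α i by omega]
        ring
      have hσz : ∀ᶠ k in 𝓤, s k = σ (x k, s' k) := by
        filter_upwards [hx0] with k hk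
        have : x k * (s k i / x k) = s k i := by field_simp
        simp [hσ, hs'def, this]
      have hr0 : r 0 = 0 := by
        have h1 : Tendsto (fun k => r (x k, s' k)) 𝓤 (𝓝 (r 0)) :=
          hra.continuousAt.tendsto.comp (hx.prodMk_nhds hs't)
        refine tendsto_nhds_unique h1 (hr.congr' ?_)
        filter_upwards [hx0, hσz] with k hk hk2
        have := hrel (x k, s' k)
        rw [← hk2] at this
        rw [← this]
        field_simp
      set Q : ℝ × (Fin m → ℝ) → ℝ × (Fin m → ℝ) × ℝ := fun p => (p.1, σ p, r p) with hQ
      have hQa : AnalyticAt ℝ Q 0 := by fun_prop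
      have hQ0 : Q 0 = 0 := by simp [hQ, hσ0, hr0]
      have hq' := (tendsto_germ hQa hQ0).eventually hq
      have hFQ : AnalyticAt ℝ (fun p => F (Q p)) 0 := AnalyticAt.fun_comp_of_eq hF hQa hQ0
      have hgood : Good 𝓤 (m + 1) (fun k => (x k, s' k)) (fun p => h (p.1, σ p)) := by
        by_cases hc0 : c = 0
        · refine good_of_mono hx hs't (a + β i) β hFQ (by rw [hQ0]; exact hF0) ?_
          filter_upwards [hq'] with p hp
          rw [hp (hrel p)]
          simp only [hQ]
          rw [hσ, mon_update, mon_split β p.2 i, hc0]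
          ring
        · refine good_of_mono (F := fun p => (c + p.2 i) ^ β i * F (Q p)) hx hs't (a + β i)
            (Function.update β i 0) (((analyticAt_const.add hcoord).pow _).mul hFQ) ?_ ?_
          · simp only [hQ0]
            simp [hc0, hF0]
          · filter_upwards [hq'] with p hp
            rw [hp (hrel p)]
            simp only [hQ]
            rw [hσ, mon_update, mul_pow]
            ring
      refine hgood.comp (fun p => (p.1, σ p)) (by fun_prop) (by simp [hσ0]) ?_ (by simp)
      filter_upwards [hσz] with k hk
      rw [hk]
    · set y : ℕ → ℝ := fun k => (s k i / x k)⁻¹ with hy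
      have hxy : ∀ᶠ k in 𝓤, x k = s k i * y k := by
        filter_upwards [hsi] with k hk
        simp only [hy]; field_simp
      have hcoord : AnalyticAt ℝ (fun p : ℝ × (Fin m → ℝ) => p.2 i) 0 :=
          AnalyticAt.fun_comp_of_eq (analyticAt_coord i 0) analyticAt_snd rfl
      have hcoord3 : AnalyticAt ℝ (fun p : ℝ × (Fin m → ℝ) × ℝ => p.2.1 i) 0 :=
          AnalyticAt.fun_comp_of_eq (analyticAt_coord i 0)
            (f := fun p : ℝ × (Fin m → ℝ) × ℝ => p.2.1) (by fun_prop) rfl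
      set ψ : ℝ × (Fin m → ℝ) → ℝ × (Fin m → ℝ) := fun p => (p.2 i * p.1, p.2) with hψ
      have hψa : AnalyticAt ℝ ψ 0 := by fun_prop
      have hψ0 : ψ 0 = 0 := by simp [hψ]
      set Q : ℝ × (Fin m → ℝ) × ℝ → ℝ × (Fin m → ℝ) × ℝ :=
        fun p => (p.2.1 i * p.1, p.2.1, p.2.2) with hQ
      have hQa : AnalyticAt ℝ Q 0 := by fun_prop
      have hQ0 : Q 0 = 0 := by simp [hQ]
      refine Good.comp ψ hψa hψ0 (z' := fun k => (y k, s k)) ?_ (Eventually.of_forall fun _ => rfl)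
        (ih α' hs' a (a • Pi.single i 1 + β) y s hc hs ?_ (fun p => h (ψ p)) (fun p => F (Q p))
        (AnalyticAt.fun_comp_of_eq hh hψa hψ0) (AnalyticAt.fun_comp_of_eq hF hQa hQ0)
        (by rw [hQ0]; exact hF0) ?_)
      · filter_upwards [hxy] with k hk
        simp [hψ, hk]
      · refine hr.congr' ?_
        filter_upwards [hxy, hx0, hsi] with k hk hk2 hk3
        have : y k ≠ 0 := by
          intro h0; rw [h0, mul_zero] at hk; exact hk2 hk
        rw [hk, e, mon_add, mon_single]
        field_simp
      · filter_upwards [(tendsto_germ hQa hQ0).eventually hq] with p hp hrel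
        have := hp (by
          simp only [hQ]
          rw [e, mon_add, mon_single, ← hrel]; ring)
        simp only [hQ] at this
        simp only [hψ, this, mon_add, mon_smul, mon_single]
        ring

end Toric

section Core

open Polynomial in
lemma poly_shift (d : ℕ) (c : ℕ → ℝ) (u0 y0 : ℝ) (hu : u0 ≠ 0) (hc : ∀ i, i + 1 = d → c i = 0)
    (i0 : ℕ) (hi0 : i0 < d) (hci0 : c i0 ≠ 0) :
    ∃ j < d, iteratedDeriv j
      (fun y : ℝ => (∑ i ∈ Finset.range d, c i * (y0 + y) ^ i) + (y0 + y) ^ d * u0) 0 ≠ 0 := by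
  set P : ℝ[X] := (∑ i ∈ Finset.range d, C (c i) * X ^ i) + C u0 * X ^ d with hP
  have hPc : ∀ j, P.coeff j = if j < d then c j else if j = d then u0 else 0 := by
    intro j
    simp only [hP, coeff_add, finsetSum_coeff, coeff_C_mul_X_pow]
    rw [Finset.sum_ite_eq]
    simp only [Finset.mem_range]
    split_ifs <;> first | omega | simp
  have hdeg : P.natDegree ≤ d := by
    rw [natDegree_le_iff_coeff_eq_zero]
    intro N hN
    rw [hPc, if_neg (by omega), if_neg (by omega)]
  set R := taylor y0 P with hR
  have hRdeg : R.natDegree ≤ d := by rw [hR, natDegree_taylor]; exact hdeg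
  have hG : ∀ y : ℝ, (∑ i ∈ Finset.range d, c i * (y0 + y) ^ i) + (y0 + y) ^ d * u0
      = (∑ i ∈ Finset.range d, R.coeff i * y ^ i) + y ^ d * R.coeff d := by
    intro y
    have h1 : R.eval y = (∑ i ∈ Finset.range d, c i * (y0 + y) ^ i) + (y0 + y) ^ d * u0 := by
      rw [hR, taylor_eval, hP]
      simp [eval_finsetSum, add_comm y, mul_comm u0]
    rw [← h1, eval_eq_sum_range' (n := d + 1) (by omega), Finset.sum_range_succ, mul_comm (y ^ d)]
  by_contra hcon
  push Not at hcon
  have h0 : ∀ j < d, R.coeff j = 0 := by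
    intro j hj
    have h1 := coeff_lt (U := fun _ => R.coeff d) analyticAt_const (Eventually.of_forall hG) hj
    rw [hcon j hj] at h1
    have : (j.factorial : ℝ) ≠ 0 := by exact_mod_cast j.factorial_ne_zero
    exact (mul_eq_zero.1 h1.symm).resolve_left this
  have hRe : R = C (R.coeff d) * X ^ d := by
    ext j
    rw [coeff_C_mul_X_pow]
    split_ifs with h
    · rw [h]
    · rcases lt_or_gt_of_ne h with h | h
      · exact h0 j h
      · exact coeff_eq_zero_of_natDegree_lt (by omega)
  have hPe : P = C (R.coeff d) * (X + C (-y0)) ^ d := by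
    have : taylor (-y0) R = P := by rw [hR, taylor_taylor]; simp
    rw [← this, hRe]
    simp [taylor_apply]
  have hcd : R.coeff d = u0 := by
    have h1 := hPc d
    rw [hPe, coeff_C_mul, coeff_X_add_C_pow] at h1
    simpa using h1
  have hy0 : y0 = 0 := by
    have h1 := hPc (d - 1)
    rw [hPe, coeff_C_mul, coeff_X_add_C_pow, if_pos (by omega), hc _ (by omega), hcd] at h1
    have h2 : d - (d - 1) = 1 := by omega
    rw [h2, pow_one] at h1
    have h3 : ((d.choose (d - 1) : ℕ) : ℝ) ≠ 0 := by
      exact_mod_cast (Nat.choose_pos (by omega)).ne'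
    have := (mul_eq_zero.1 ((mul_eq_zero.1 h1).resolve_left hu)).resolve_right h3
    linarith
  have h1 := hPc i0
  rw [hPe, coeff_C_mul, coeff_X_add_C_pow, if_pos hi0, hy0] at h1
  rw [neg_zero, zero_pow (by omega)] at h1
  simp at h1
  exact hci0 h1.symm

variable {𝓤 : Ultrafilter ℕ} {m : ℕ}

def QQ (𝓤 : Ultrafilter ℕ) (m d : ℕ) : Prop :=
  ∀ (x : ℕ → ℝ) (t : ℕ → Fin m → ℝ), Tendsto x 𝓤 (𝓝 0) → Tendsto t 𝓤 (𝓝 0) →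
    ∀ (f : ℝ × (Fin m → ℝ) → ℝ) (g : (Fin m → ℝ) → ℝ), AnalyticAt ℝ f 0 → AnalyticAt ℝ g 0 →
    iteratedDeriv d (fun y => f (y, 0)) 0 ≠ 0 →
    Good 𝓤 (m + 1) (fun k => (x k, t k)) (fun p => f p * g p.2)

lemma comp_snd {V W : Type*} [NormedAddCommGroup V] [NormedSpace ℝ V]
    [NormedAddCommGroup W] [NormedSpace ℝ W] {a : W → ℝ} (ha : AnalyticAt ℝ a 0) :
    AnalyticAt ℝ (fun p : V × W => a p.2) 0 :=
  AnalyticAt.fun_comp_of_eq ha analyticAt_snd rfl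

lemma core (hU : UU 𝓤 m) {d : ℕ} (hQ : ∀ j < d, QQ 𝓤 m j) {x : ℕ → ℝ} {s : ℕ → Fin m → ℝ}
    (hx : Tendsto x 𝓤 (𝓝 0)) (hs : Tendsto s 𝓤 (𝓝 0)) {f : ℝ × (Fin m → ℝ) → ℝ}
    {g : (Fin m → ℝ) → ℝ} (hf : AnalyticAt ℝ f 0) (hg : AnalyticAt ℝ g 0) (hgM : Mono g)
    {a : ℕ → (Fin m → ℝ) → ℝ} (ha : ∀ i, AnalyticAt ℝ (a i) 0) {u : ℝ × (Fin m → ℝ) → ℝ}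
    (hu : AnalyticAt ℝ u 0) (hu0 : u 0 ≠ 0) {α : Fin m → ℕ} (hα : α ≠ 0)
    (hlast : ∀ i, i + 1 = d → a i = 0) {i0 : ℕ} (hi0 : i0 < d) (hai0 : a i0 0 ≠ 0)
    (h : ∀ᶠ p in 𝓝 0, f p = (∑ i ∈ Finset.range d, mon α p.2 ^ (d - i) * a i p.2 * p.1 ^ i)
      + p.1 ^ d * u p) :
    Good 𝓤 (m + 1) (fun k => (x k, s k)) (fun p => f p * g p.2) := by
  have hfg : AnalyticAt ℝ (fun p : ℝ × (Fin m → ℝ) => f p * g p.2) 0 := hf.mul (comp_snd hg)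
  by_cases hdrop : ∃ k, ∀ᶠ n in 𝓤, s n k = 0
  · obtain ⟨k, hk⟩ := hdrop
    exact (drop_snd hU hx hs k hk hfg).mono (Nat.le_succ m)
  push Not at hdrop
  have hne : ∀ᶠ n in 𝓤, mon α (s n) ≠ 0 := by
    have : ∀ᶠ n in 𝓤, ∀ k, s n k ≠ 0 := by
      rw [eventually_all]
      intro k
      exact (Ultrafilter.eventually_not (p := fun n => s n k = 0)).2 (by simpa using hdrop k)
    filter_upwards [this] with n hn using mon_ne_zero α hn
  rcases ultra_alt (𝓤 := 𝓤) (fun n => x n / mon α (s n)) with ⟨c, hc⟩ | hc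
  · have hy : Tendsto (fun n => x n / mon α (s n) - c) 𝓤 (𝓝 0) := by
      simpa using hc.sub_const c
    have hmon : AnalyticAt ℝ (fun p : ℝ × (Fin m → ℝ) => mon α p.2) 0 :=
      comp_snd (analyticAt_mon α 0)
    set ψ : ℝ × (Fin m → ℝ) → ℝ × (Fin m → ℝ) := fun p => (mon α p.2 * (c + p.1), p.2) with hψ
    have hψa : AnalyticAt ℝ ψ 0 := by fun_prop
    have hψ0 : ψ 0 = 0 := by simp [hψ, mon_at_zero hα]
    set f' : ℝ × (Fin m → ℝ) → ℝ := fun p =>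
      (∑ i ∈ Finset.range d, a i p.2 * (c + p.1) ^ i) + (c + p.1) ^ d * u (ψ p) with hf'
    have hf'a : AnalyticAt ℝ f' 0 := by
      have h1 : AnalyticAt ℝ (fun p => u (ψ p)) 0 := AnalyticAt.fun_comp_of_eq hu hψa hψ0
      have h2 : AnalyticAt ℝ (fun p : ℝ × (Fin m → ℝ) =>
          ∑ i ∈ Finset.range d, a i p.2 * (c + p.1) ^ i) 0 :=
        Finset.analyticAt_fun_sum _ fun i _ => (comp_snd (ha i)).mul (by fun_prop)
      exact h2.add (AnalyticAt.mul (by fun_prop) h1)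
    obtain ⟨j, hj, hjd⟩ := poly_shift d (fun i => a i 0) (u 0) c hu0
      (fun i hi => by simp [hlast i hi]) i0 hi0 hai0
    have hmem : (fun y : ℝ => f' (y, 0)) = (fun y : ℝ =>
        (∑ i ∈ Finset.range d, a i 0 * (c + y) ^ i) + (c + y) ^ d * u 0) := by
      funext y
      simp only [hf', hψ, mon_at_zero hα, zero_mul]
      rfl
    refine Good.comp ψ hψa hψ0 ?_ ?_ (hQ j hj (fun n => x n / mon α (s n) - c) s hy hs f'
      (fun t => mon α t ^ d * g t) hf'a (((analyticAt_mon α 0).pow d).mul hg) (by rw [hmem]; exact hjd))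
    · filter_upwards [hne] with n hn
      simp only [hψ]
      ext1
      · simp; field_simp
      · rfl
    · filter_upwards [(tendsto_germ hψa hψ0).eventually h] with p hp
      rw [hp]
      simp only [hf', hψ]
      have : ∑ i ∈ Finset.range d, mon α p.2 ^ (d - i) * a i p.2 * (mon α p.2 * (c + p.1)) ^ i
          = mon α p.2 ^ d * ∑ i ∈ Finset.range d, a i p.2 * (c + p.1) ^ i := by
        rw [Finset.mul_sum]
        refine Finset.sum_congr rfl fun i hi => ?_
        have hi := Finset.mem_range.1 hi
        conv_rhs => rw [show d = (d - i) + i by omega, pow_add]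
        rw [mul_pow]; ring
      rw [this, mul_pow]
      ring
  · obtain ⟨β, v, hv, hv0, hgv⟩ := hgM
    have hc' : Tendsto (fun n => mon α (s n) / x n) 𝓤 (𝓝 0) := by
      simpa only [inv_div] using hc
    set π : ℝ × (Fin m → ℝ) × ℝ → ℝ × (Fin m → ℝ) := fun q => (q.1, q.2.1) with hπ
    have hπa : AnalyticAt ℝ π 0 := by fun_prop
    have hπ0 : π 0 = 0 := rfl
    have hv3 : AnalyticAt ℝ (fun q : ℝ × (Fin m → ℝ) × ℝ => v q.2.1) 0 :=
      AnalyticAt.fun_comp_of_eq hv (f := fun q : ℝ × (Fin m → ℝ) × ℝ => q.2.1) (by fun_prop) rfl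
    refine toric hU _ α rfl d β x s hx hs hc' _
      (fun q => ((∑ i ∈ Finset.range d, a i q.2.1 * q.2.2 ^ (d - i)) + u (π q)) * v q.2.1) hfg ?_ ?_ ?_
    · refine AnalyticAt.mul (AnalyticAt.add (Finset.analyticAt_fun_sum _ fun i _ => ?_)
        (AnalyticAt.fun_comp_of_eq hu hπa hπ0)) hv3
      exact (AnalyticAt.fun_comp_of_eq (ha i) (f := fun q : ℝ × (Fin m → ℝ) × ℝ => q.2.1)
        (by fun_prop) rfl).mul (by fun_prop)
    · rw [hπ0]
      refine mul_ne_zero ?_ hv0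
      rw [Finset.sum_eq_zero, zero_add]
      · exact hu0
      · intro i hi
        have hi := Finset.mem_range.1 hi
        simp; right; omega
    · have h2 : Tendsto (fun q : ℝ × (Fin m → ℝ) × ℝ => q.2.1) (𝓝 0) (𝓝 0) :=
        tendsto_germ (by fun_prop) rfl
      filter_upwards [(tendsto_germ hπa hπ0).eventually h, h2.eventually hgv] with q h3 h4 hrel
      simp only [hπ] at h3 ⊢
      rw [h3, h4, ← hrel]
      have : ∑ i ∈ Finset.range d, (q.1 * q.2.2) ^ (d - i) * a i q.2.1 * q.1 ^ i
          = q.1 ^ d * ∑ i ∈ Finset.range d, a i q.2.1 * q.2.2 ^ (d - i) := by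
        rw [Finset.mul_sum]
        refine Finset.sum_congr rfl fun i hi => ?_
        have hi := Finset.mem_range.1 hi
        have : q.1 ^ d = q.1 ^ (d - i) * q.1 ^ i := by
          rw [← pow_add, show d - i + i = d by omega]
        rw [this, mul_pow]; ring
      rw [this]
      ring

end Core

section Pre

variable {𝓤 : Ultrafilter ℕ} {m : ℕ}

lemma power_subst {D : ℕ} (hD : D ≠ 0) {t : ℕ → Fin m → ℝ} (ht : Tendsto t 𝓤 (𝓝 0)) :
    ∃ ε : Fin m → ℝ, (∀ k, ε k ≠ 0) ∧ ∃ s : ℕ → Fin m → ℝ, Tendsto s 𝓤 (𝓝 0) ∧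
      ∀ᶠ n in 𝓤, t n = fun k => ε k * s n k ^ D := by
  classical
  refine ⟨fun k => if ∀ᶠ n in 𝓤, 0 ≤ t n k then 1 else -1, fun k => by dsimp only; split_ifs <;> norm_num,
    fun n k => |t n k| ^ ((D : ℝ)⁻¹), ?_, ?_⟩
  · rw [tendsto_pi_nhds] at ht ⊢
    intro k
    have h1 : Tendsto (fun n => |t n k|) 𝓤 (𝓝 0) := by simpa using (ht k).abs
    have h2 : (0 : ℝ) < (D : ℝ)⁻¹ := by positivity
    have := h1.rpow_const (p := (D : ℝ)⁻¹) (Or.inr h2.le)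
    rwa [Real.zero_rpow h2.ne'] at this
  · have : ∀ k, ∀ᶠ n in 𝓤, t n k = (if ∀ᶠ n in 𝓤, 0 ≤ t n k then 1 else -1) *
        (|t n k| ^ ((D : ℝ)⁻¹)) ^ D := by
      intro k
      by_cases h : ∀ᶠ n in 𝓤, 0 ≤ t n k
      · filter_upwards [h] with n hn
        rw [if_pos h, Real.rpow_inv_natCast_pow (abs_nonneg _) hD, abs_of_nonneg hn, one_mul]
      · have h' := (Ultrafilter.eventually_not (p := fun n => 0 ≤ t n k)).2 h
        filter_upwards [h'] with n hn
        rw [if_neg h, Real.rpow_inv_natCast_pow (abs_nonneg _) hD, abs_of_neg (not_le.1 hn)]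
        ring
    filter_upwards [eventually_all.2 this] with n hn
    funext k
    exact hn k

lemma mon_subst (b : Fin m → ℕ) (ε s : Fin m → ℝ) (D : ℕ) :
    mon b (fun k => ε k * s k ^ D) = mon b ε * mon (D • b) s := by
  simp only [mon, mul_pow, Finset.prod_mul_distrib, Pi.smul_apply, smul_eq_mul, pow_mul]

lemma pre (hU : UU 𝓤 m) {d : ℕ} (hQ : ∀ j < d, QQ 𝓤 m j) {x : ℕ → ℝ} {t : ℕ → Fin m → ℝ}
    (hx : Tendsto x 𝓤 (𝓝 0)) (ht : Tendsto t 𝓤 (𝓝 0)) {f : ℝ × (Fin m → ℝ) → ℝ}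
    {g : (Fin m → ℝ) → ℝ} (hf : AnalyticAt ℝ f 0) (hg : AnalyticAt ℝ g 0) (hgM : ZM g)
    {a : ℕ → (Fin m → ℝ) → ℝ} (haM : ∀ i < d, ZM (a i)) (ha0 : ∀ i < d, a i 0 = 0)
    (hdiff : ∀ i < d, ∀ j < d, ZM (fun v => a i v ^ (d.factorial / (d - i)) -
      a j v ^ (d.factorial / (d - j))))
    {u : ℝ × (Fin m → ℝ) → ℝ}
    (hu : AnalyticAt ℝ u 0) (hu0 : u 0 ≠ 0)
    (hlast : ∀ i, i + 1 = d → a i = 0)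
    (h : ∀ᶠ p in 𝓝 0, f p = (∑ i ∈ Finset.range d, a i p.2 * p.1 ^ i) + p.1 ^ d * u p) :
    Good 𝓤 (m + 1) (fun k => (x k, t k)) (fun p => f p * g p.2) := by
  classical
  have hsnd : Tendsto (fun p : ℝ × (Fin m → ℝ) => p.2) (𝓝 0) (𝓝 0) :=
    tendsto_germ analyticAt_snd rfl
  rcases hgM with hg0 | hgM
  · refine good_of_zero hx ht ?_
    filter_upwards [hsnd.eventually hg0] with p hp
    rw [hp, mul_zero]
  obtain ⟨β, v, hv, hv0, hgv⟩ := hgM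
  set I := (Finset.range d).filter (fun i => i + 1 ≠ d ∧ Mono (a i)) with hI
  have hnotI : ∀ i < d, i ∉ I → ∀ᶠ t in 𝓝 0, a i t = 0 := by
    intro i hi hiI
    by_cases h1 : i + 1 = d
    · rw [hlast i h1]; simp
    · have : ¬ Mono (a i) := fun hM => hiI (by simp [hI, hi, h1, hM])
      exact (haM i hi).resolve_right this
  by_cases hemp : I = ∅
  · refine good_of_mono (F := fun p => u p * v p.2) hx ht d β (hu.mul (comp_snd hv))
      (mul_ne_zero hu0 hv0) ?_
    have h2 : ∀ᶠ t in 𝓝 (0 : Fin m → ℝ), ∀ i ∈ Finset.range d, a i t = 0 := by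
      rw [Filter.eventually_all_finset]
      intro i hi
      exact hnotI i (Finset.mem_range.1 hi) (by simp [hemp])
    filter_upwards [h, hsnd.eventually hgv, hsnd.eventually h2] with p h3 h4 h5
    rw [h3, h4, Finset.sum_eq_zero (fun i hi => by rw [h5 i hi, zero_mul])]
    ring
  have hIne : I.Nonempty := Finset.nonempty_iff_ne_empty.2 hemp
  have hIM : ∀ i, i ∈ I → Mono (a i) := fun i hi => (Finset.mem_filter.1 hi).2.2
  have hId : ∀ i, i ∈ I → i < d := fun i hi => Finset.mem_range.1 (Finset.mem_filter.1 hi).1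
  have hIl : ∀ i, i ∈ I → i + 1 ≠ d := fun i hi => (Finset.mem_filter.1 hi).2.1
  choose! b w hw hw0 hbw using hIM
  set e : ℕ → ℕ := fun i => d.factorial / (d - i) with he
  have hed : ∀ i < d, (d - i) * e i = d.factorial := fun i hi =>
    Nat.mul_div_cancel' (Nat.dvd_factorial (by omega) (by omega))
  have hfac : d.factorial ≠ 0 := d.factorial_ne_zero
  have hene : ∀ i < d, e i ≠ 0 := by
    intro i hi h0
    have := hed i hi
    rw [h0, mul_zero] at this
    exact hfac this.symm
  obtain ⟨i0, hi0, hmin⟩ := Finset.exists_min_image I (fun i => ∑ k, (e i • b i) k) hIne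
  set A := e i0 • b i0 with hA
  have hle : ∀ i ∈ I, A ≤ e i • b i := by
    intro i hi
    have htot := order_total (α := A) (β := e i • b i) (u := fun t => w i0 t ^ e i0)
      (v := fun t => w i t ^ e i) ((hw i0 hi0).continuousAt.pow _) ((hw i hi).continuousAt.pow _)
      (pow_ne_zero _ (hw0 i0 hi0)) (pow_ne_zero _ (hw0 i hi)) (by
        refine (hdiff i0 (hId i0 hi0) i (hId i hi)).congr ?_
        filter_upwards [hbw i0 hi0, hbw i hi] with t h1 h2
        rw [h1, h2, hA, mon_smul, mon_smul, mul_pow, mul_pow])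
    rcases htot with h1 | h1
    · exact h1
    · have h2 := hmin i hi
      have h3 : ∑ k, (e i • b i) k ≤ ∑ k, A k := Finset.sum_le_sum fun k _ => h1 k
      have h4 := (Finset.sum_eq_sum_iff_of_le (fun k _ => h1 k)).1 (le_antisymm h3 h2)
      intro k
      exact (h4 k (Finset.mem_univ k)).ge
  have hAne : A ≠ 0 := by
    intro hA0
    have hb0 : b i0 = 0 := by
      funext k
      have := congrFun hA0 k
      simpa [hA, hene i0 (hId i0 hi0)] using this
    have h1 := (hbw i0 hi0).self_of_nhds
    rw [ha0 i0 (hId i0 hi0), hb0, mon_zero, one_mul] at h1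
    exact hw0 i0 hi0 h1.symm
  obtain ⟨ε, hε, s, hs, hts⟩ := power_subst hfac ht
  set σ : (Fin m → ℝ) → (Fin m → ℝ) := fun s k => ε k * s k ^ d.factorial with hσ
  have hσa : AnalyticAt ℝ σ 0 := AnalyticAt.pi fun k => by fun_prop
  have hσ0 : σ 0 = 0 := by funext k; simp [hσ, hfac]
  have hσt := tendsto_germ hσa hσ0
  have hδ : ∀ i ∈ I, d.factorial • b i = (d - i) • A + (d.factorial • b i - (d - i) • A) := by
    intro i hi
    have h1 : (d - i) • A ≤ d.factorial • b i := by
      rw [← hed i (hId i hi), mul_smul]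
      exact nsmul_le_nsmul_right (hle i hi) _
    exact (add_tsub_cancel_of_le h1).symm
  set a' : ℕ → (Fin m → ℝ) → ℝ := fun i => if i ∈ I then
    fun s => mon (b i) ε * mon (d.factorial • b i - (d - i) • A) s * w i (σ s) else 0 with ha'
  set ψ : ℝ × (Fin m → ℝ) → ℝ × (Fin m → ℝ) := fun p => (p.1, σ p.2) with hψ
  have hψa : AnalyticAt ℝ ψ 0 := by
    have : AnalyticAt ℝ (fun p : ℝ × (Fin m → ℝ) => σ p.2) 0 :=
      AnalyticAt.fun_comp_of_eq hσa analyticAt_snd rfl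
    fun_prop
  have hψ0 : ψ 0 = 0 := by simp [hψ, hσ0]
  have hψt := tendsto_germ hψa hψ0
  refine Good.comp ψ hψa hψ0 (z' := fun n => (x n, s n)) (g' := fun p => f (ψ p) * g (σ p.2)) ?_
    (Eventually.of_forall fun _ => rfl)
    (core (f := fun p => f (ψ p)) (g := fun s => g (σ s)) (a := a') (u := fun p => u (ψ p)) (α := A)
      (i0 := i0) (d := d) hU hQ hx hs
      (AnalyticAt.fun_comp_of_eq hf hψa hψ0) (AnalyticAt.fun_comp_of_eq hg hσa hσ0) ?_ ?_
      (AnalyticAt.fun_comp_of_eq hu hψa hψ0) (by rw [hψ0]; exact hu0) hAne ?_ (hId i0 hi0) ?_ ?_)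
  · filter_upwards [hts] with n hn
    rw [hn]
  · refine ⟨d.factorial • β, fun s => mon β ε * v (σ s),
      analyticAt_const.mul (AnalyticAt.fun_comp_of_eq hv hσa hσ0), ?_, ?_⟩
    · dsimp only; rw [hσ0]; exact mul_ne_zero (mon_ne_zero β hε) hv0
    · filter_upwards [hσt.eventually hgv] with s hs
      rw [hs]
      simp only [hσ]
      rw [mon_subst]; ring
  · intro i
    by_cases hi : i ∈ I
    · simp only [ha', if_pos hi]
      exact (analyticAt_const.mul (analyticAt_mon _ _)).mul
        (AnalyticAt.fun_comp_of_eq (hw i hi) hσa hσ0)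
    · simp only [ha', if_neg hi]
      exact analyticAt_const
  · intro i hi
    have : i ∉ I := fun h1 => hIl i h1 hi
    simp only [ha', if_neg this]
  · simp only [ha', if_pos hi0, hσ0]
    refine mul_ne_zero (mul_ne_zero (mon_ne_zero _ hε) ?_) (hw0 i0 hi0)
    have : d.factorial • b i0 - (d - i0) • A = 0 := by
      rw [hA, ← mul_smul, hed i0 (hId i0 hi0)]
      simp
    rw [this, mon_zero]
    exact one_ne_zero
  · have h2 : ∀ᶠ s in 𝓝 (0 : Fin m → ℝ), ∀ i ∈ Finset.range d,
        a i (σ s) = mon A s ^ (d - i) * a' i s := by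
      rw [Filter.eventually_all_finset]
      intro i hi
      by_cases hiI : i ∈ I
      · filter_upwards [hσt.eventually (hbw i hiI)] with s hs
        rw [hs]
        simp only [ha', if_pos hiI]
        have : mon (b i) (σ s) = mon (b i) ε * (mon A s ^ (d - i) *
            mon (d.factorial • b i - (d - i) • A) s) := by
          simp only [hσ]
          rw [mon_subst, hδ i hiI, mon_add, mon_smul]
          simp
        rw [this]; ring
      · filter_upwards [hσt.eventually (hnotI i (Finset.mem_range.1 hi) hiI)] with s hs
        rw [hs]
        simp [ha', if_neg hiI]
    filter_upwards [hψt.eventually h, hsnd.eventually h2] with p h3 h4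
    rw [h3]
    simp only [hψ]
    congr 1
    exact Finset.sum_congr rfl fun i hi => by rw [h4 i hi]

lemma QQ_all (hU : ∀ k ≤ m, UU 𝓤 k) (d : ℕ) : QQ 𝓤 m d := by
  induction d using Nat.strong_induction_on with
  | _ d ih =>
  intro x t hx ht f g hf hg hd
  by_cases hlow : ∀ i < d, iteratedDeriv i (fun y => f (y, 0)) 0 = 0
  swap
  · push Not at hlow
    obtain ⟨j, hj, hj2⟩ := hlow
    exact ih j hj x t hx ht f g hf hg hj2
  obtain ⟨h, hh, hh0, a, u, ha, hu, hu0, ha0, hlast, heq⟩ := tsch f hf d hd hlow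
  have hht : Tendsto (fun n => h (t n)) 𝓤 (𝓝 0) := (tendsto_germ hh hh0).comp ht
  set x' : ℕ → ℝ := fun n => x n - h (t n) with hx'
  have hx't : Tendsto x' 𝓤 (𝓝 0) := by simpa using hx.sub hht
  obtain ⟨m', hm', w, φ, hw, hφ, hφ0, hz, hZ⟩ := goodAll hU t ht
    (fun o : Option (Fin d ⊕ (Fin d × Fin d)) => match o with
      | none => g
      | some (Sum.inl i) => a i
      | some (Sum.inr (i, j)) => fun v => a i v ^ (d.factorial / (d - i)) -
          a j v ^ (d.factorial / (d - j)))
    (fun o => match o with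
      | none => hg
      | some (Sum.inl i) => ha i
      | some (Sum.inr (i, j)) => ((ha i).pow _).sub ((ha j).pow _))
  set ψ : ℝ × (Fin m' → ℝ) → ℝ × (Fin m → ℝ) := fun p => (p.1 + h (φ p.2), φ p.2) with hψ
  have hφ2 : AnalyticAt ℝ (fun p : ℝ × (Fin m' → ℝ) => φ p.2) 0 :=
    AnalyticAt.fun_comp_of_eq hφ analyticAt_snd rfl
  have hψa : AnalyticAt ℝ ψ 0 := by
    have : AnalyticAt ℝ (fun p : ℝ × (Fin m' → ℝ) => h (φ p.2)) 0 :=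
      AnalyticAt.fun_comp_of_eq hh hφ2 (by simpa using hφ0)
    exact (analyticAt_fst.add this).prod hφ2
  have hψ0 : ψ 0 = 0 := by simp [hψ, hφ0, hh0]
  have hfψ : AnalyticAt ℝ (fun p => f (ψ p)) 0 := AnalyticAt.fun_comp_of_eq hf hψa hψ0
  have hgφ : AnalyticAt ℝ (fun t => g (φ t)) 0 := AnalyticAt.fun_comp_of_eq hg hφ hφ0
  refine Good.comp ψ hψa hψ0 (z' := fun n => (x' n, w n)) (g' := fun p => f (ψ p) * g (φ p.2)) ?_
    (Eventually.of_forall fun _ => rfl) ?_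
  · filter_upwards [hz] with n hn
    simp [hψ, hx', ← hn]
  rcases hm'.lt_or_eq with hlt | heqm
  · exact ((hU (m' + 1) hlt).good_prod hx't hw (hfψ.mul (comp_snd hgφ))).mono (by omega)
  · subst heqm
    set χ : ℝ × (Fin m' → ℝ) → ℝ × (Fin m' → ℝ) := fun p => (p.1, φ p.2) with hχ
    have hχa : AnalyticAt ℝ χ 0 := by fun_prop
    have hχ0 : χ 0 = 0 := by simp [hχ, hφ0]
    refine pre (f := fun p => f (ψ p)) (g := fun t => g (φ t)) (a := fun i t => a i (φ t))
      (u := fun p => u (χ p)) (d := d) (hU m' le_rfl) ih hx't hw hfψ hgφ (hZ none)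
      (fun i hi => hZ (some (Sum.inl ⟨i, hi⟩))) (fun i hi => by simpa only [hφ0] using ha0 i hi)
      (fun i hi j hj => hZ (some (Sum.inr (⟨i, hi⟩, ⟨j, hj⟩))))
      (AnalyticAt.fun_comp_of_eq hu hχa hχ0) (by rw [hχ0]; exact hu0) (fun i hi => ?_) ?_
    · rw [hlast i hi]; rfl
    · exact (tendsto_germ hχa hχ0).eventually heq

end Pre

section UUall

variable {𝓤 : Ultrafilter ℕ} {m : ℕ}

lemma good_id {N : ℕ} {z : ℕ → Fin N → ℝ} (hz : Tendsto z 𝓤 (𝓝 0)) {g : (Fin N → ℝ) → ℝ}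
    (hg : ZM g) : Good 𝓤 N z g :=
  ⟨N, le_rfl, z, fun v => v, hz, analyticAt_id, rfl, by simp, fun _ => hg⟩

lemma mono_of_ne {g : (Fin m → ℝ) → ℝ} (hg : AnalyticAt ℝ g 0) (h : g 0 ≠ 0) : Mono g :=
  ⟨0, g, hg, h, by simp⟩

lemma UU_all (m : ℕ) : UU 𝓤 m := by
  induction m using Nat.strong_induction_on with
  | _ N ih =>
  intro z hz g hg
  by_cases hg0 : g 0 = 0
  swap
  · exact good_id hz (Or.inr (mono_of_ne hg hg0))
  by_cases hzero : ∀ᶠ v in 𝓝 0, g v = 0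
  · exact good_id hz (Or.inl hzero)
  obtain ⟨w, hw⟩ := exists_ray g hg hzero
  have hw0 : w ≠ 0 := by
    rintro rfl
    simp [hg0] at hw
  cases N with
  | zero => exact absurd (Subsingleton.elim w 0) hw0
  | succ m =>
  have he0 : (Pi.single 0 1 : Fin (m + 1) → ℝ) ≠ 0 := by
    intro h
    have := congrFun h 0
    simp at this
  obtain ⟨L, hL⟩ := SeparatingDual.exists_continuousLinearEquiv_apply_eq (R := ℝ) he0 hw0
  set c : ℝ × (Fin m → ℝ) → (Fin (m + 1) → ℝ) := fun p => Fin.cons p.1 p.2 with hc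
  have hca : AnalyticAt ℝ c 0 := by
    refine AnalyticAt.pi fun j => ?_
    refine Fin.cases ?_ (fun i => ?_) j
    · simpa [hc] using analyticAt_fst
    · simpa [hc] using comp_snd (V := ℝ) (analyticAt_coord i (0 : Fin m → ℝ))
  have hc0 : c 0 = 0 := by
    funext j
    refine Fin.cases ?_ (fun i => ?_) j <;> simp [hc]
  have hcu : ∀ v, c (unc m v) = v := by
    intro v
    funext j
    refine Fin.cases ?_ (fun i => ?_) j <;> simp [hc, unc]
  set Ψ : ℝ × (Fin m → ℝ) → (Fin (m + 1) → ℝ) := fun p => L (c p) with hΨ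
  have hΨa : AnalyticAt ℝ Ψ 0 := AnalyticAt.fun_comp_of_eq (L.analyticAt 0) hca hc0
  have hΨ0 : Ψ 0 = 0 := by simp [hΨ, hc0]
  have hray : ∀ y : ℝ, Ψ (y, 0) = y • w := by
    intro y
    have : c (y, 0) = y • (Pi.single 0 1 : Fin (m + 1) → ℝ) := by
      funext j
      refine Fin.cases ?_ (fun i => ?_) j <;> simp [hc]
    simp only [hΨ]
    rw [this, map_smul, hL]
  have hz' : Tendsto (fun n => unc m (L.symm (z n))) 𝓤 (𝓝 0) := by
    have h1 : Tendsto (fun n => L.symm (z n)) 𝓤 (𝓝 0) := by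
      have := (L.symm.continuous.tendsto 0).comp hz
      simpa [Function.comp_def] using this
    exact (tendsto_germ (analyticAt_unc m 0) rfl).comp h1
  have hG : AnalyticAt ℝ (fun y : ℝ => g (y • w)) 0 :=
    AnalyticAt.fun_comp_of_eq hg (by fun_prop) (by simp)
  obtain ⟨d, hd⟩ : ∃ d, iteratedDeriv d (fun y : ℝ => g (y • w)) 0 ≠ 0 := by
    by_contra hcon
    push Not at hcon
    apply hw
    rw [← analyticOrderAt_eq_top, ENat.eq_top_iff_forall_ge]
    intro n
    exact (natCast_le_analyticOrderAt_iff_iteratedDeriv_eq_zero hG).2 fun i _ => hcon i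
  have hQ := QQ_all (𝓤 := 𝓤) (m := m) (fun k hk => ih k (by omega)) d
    (fun n => (unc m (L.symm (z n))).1) (fun n => (unc m (L.symm (z n))).2)
    ((continuous_fst.tendsto' _ _ rfl).comp hz') ((continuous_snd.tendsto' _ _ rfl).comp hz')
    (fun p => g (Ψ p)) (fun _ => 1) (AnalyticAt.fun_comp_of_eq hg hΨa hΨ0) analyticAt_const (by
      simpa only [hray] using hd)
  refine Good.comp Ψ hΨa hΨ0 (Eventually.of_forall fun n => ?_)
    (Eventually.of_forall fun _ => by simp) hQ
  simp [hΨ, hcu]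

end UUall

section Final

lemma mono_bound {n m : ℕ} {f : (Fin n → ℝ) → ℝ} (hf : AnalyticAt ℝ f 0) (hf0 : f 0 = 0)
    {φ : (Fin m → ℝ) → (Fin n → ℝ)} (hφ : AnalyticAt ℝ φ 0) (hφ0 : φ 0 = 0)
    (h : Mono (fun v => f (φ v))) :
    ∀ᶠ v in 𝓝 0, |f (φ v)| ≤ 2 * ‖fderiv ℝ f (φ v)‖ := by
  obtain ⟨α, u, hu, hu0, h⟩ := h
  have hα : α ≠ 0 := by
    rintro rfl
    have := h.self_of_nhds
    simp [hφ0, hf0] at this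
    exact hu0 this.symm
  obtain ⟨i, hi⟩ := Function.ne_iff.1 hα
  have hi : α i ≠ 0 := hi
  have hφt := tendsto_germ hφ hφ0
  have hci : Tendsto (fun v : Fin m → ℝ => v i) (𝓝 0) (𝓝 0) :=
    (continuous_apply i).tendsto' _ _ rfl
  have hsingle : ContinuousAt (fun v : Fin m → ℝ => (Pi.single i (v i) : Fin m → ℝ)) 0 := by
    have : Continuous (fun v : Fin m → ℝ => (Pi.single i (v i) : Fin m → ℝ)) :=
      (continuous_single i).comp (continuous_apply i)
    exact this.continuousAt
  have hφ' : Tendsto (fun v => fderiv ℝ φ v (Pi.single i (v i))) (𝓝 0) (𝓝 0) := by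
    have := (hφ.fderiv.continuousAt.clm_apply hsingle).tendsto
    simpa using this
  have hu' : Tendsto (fun v => fderiv ℝ u v (Pi.single i (v i))) (𝓝 0) (𝓝 0) := by
    have := (hu.fderiv.continuousAt.clm_apply hsingle).tendsto
    simpa using this
  have hlim : Tendsto (fun v => |α i * u v + fderiv ℝ u v (Pi.single i (v i))| - |u v| / 2) (𝓝 0)
      (𝓝 (|α i * u 0 + 0| - |u 0| / 2)) :=
    ((hu.continuousAt.tendsto.const_mul _).add hu').abs.sub (hu.continuousAt.tendsto.abs.div_const 2)
  have hpos : 0 < |α i * u 0 + 0| - |u 0| / 2 := by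
    have h1 : (1 : ℝ) ≤ α i := by exact_mod_cast Nat.one_le_iff_ne_zero.2 hi
    have h2 : 0 < |u 0| := abs_pos.2 hu0
    rw [add_zero, abs_mul, abs_of_nonneg (by positivity : (0 : ℝ) ≤ α i)]
    nlinarith
  have hφn : ∀ᶠ v in 𝓝 0, ‖fderiv ℝ φ v (Pi.single i (v i))‖ < 1 := by
    have := hφ'.norm
    rw [norm_zero] at this
    exact this.eventually (gt_mem_nhds one_pos)
  filter_upwards [h.eventually_nhds, hlim.eventually (lt_mem_nhds hpos), hφn,
    hu.eventually_analyticAt, hφ.eventually_analyticAt, hφt.eventually hf.eventually_analyticAt]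
    with v h1 h2 h3 h4 h5 h6
  set e : Fin m → ℝ := Pi.single i (v i) with he
  have hA : HasDerivAt (fun t : ℝ => f (φ (v + t • e)))
      (fderiv ℝ f (φ v) (fderiv ℝ φ v e)) 0 := by
    have := (h6.differentiableAt.hasFDerivAt.comp v h5.differentiableAt.hasFDerivAt).hasLineDerivAt e
    exact this
  have hB : HasDerivAt (fun t : ℝ => (1 + t) ^ α i * mon α v * u (v + t • e))
      (α i * mon α v * u v + mon α v * fderiv ℝ u v e) 0 := by
    have b1 : HasDerivAt (fun t : ℝ => u (v + t • e)) (fderiv ℝ u v e) 0 :=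
      h4.differentiableAt.hasFDerivAt.hasLineDerivAt e
    have b2 : HasDerivAt (fun t : ℝ => (1 + t) ^ α i * mon α v) (α i * mon α v) 0 := by
      have := (((hasDerivAt_id (0 : ℝ)).const_add 1).pow (α i)).mul_const (mon α v)
      simpa using this
    exact (b2.mul b1).congr_deriv (by simp)
  have hE : (fun t : ℝ => f (φ (v + t • e))) =ᶠ[𝓝 0]
      (fun t : ℝ => (1 + t) ^ α i * mon α v * u (v + t • e)) := by
    have hcont : Tendsto (fun t : ℝ => v + t • e) (𝓝 0) (𝓝 v) := by
      have : Continuous (fun t : ℝ => v + t • e) := by fun_prop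
      exact this.tendsto' _ _ (by simp)
    filter_upwards [hcont.eventually h1] with t ht
    rw [ht]
    have : v + t • e = Function.update v i (v i * (1 + t)) := by
      funext j
      by_cases hj : j = i
      · subst hj; simp [he]; ring
      · simp [he, hj]
    congr 1
    rw [this, mon_update, mon_split α v i, mul_pow]
    ring
  have hEq := hA.unique (hB.congr_of_eventuallyEq hE)
  have h7 := h1.self_of_nhds
  have h8 : |mon α v * (α i * u v + fderiv ℝ u v e)| ≤ ‖fderiv ℝ f (φ v)‖ := by
    have : mon α v * (α i * u v + fderiv ℝ u v e) = fderiv ℝ f (φ v) (fderiv ℝ φ v e) := by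
      rw [hEq]; ring
    rw [this, ← Real.norm_eq_abs]
    refine ((fderiv ℝ f (φ v)).le_opNorm _).trans ?_
    exact mul_le_of_le_one_right (norm_nonneg _) h3.le
  rw [h7, abs_mul]
  rw [abs_mul] at h8
  have h9 : |u v| / 2 ≤ |α i * u v + fderiv ℝ u v e| := by linarith
  have h10 := mul_le_mul_of_nonneg_left h9 (abs_nonneg (mon α v))
  linarith

lemma loj_zero {n : ℕ} {f : (Fin n → ℝ) → ℝ} (hf : AnalyticAt ℝ f 0) (hf0 : f 0 = 0) :
    ∃ C > 0, ∀ᶠ v in 𝓝 0, |f v| ≤ C * ‖fderiv ℝ f v‖ := by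
  by_contra hcon
  push Not at hcon
  have hex : ∀ k : ℕ, ∃ v : Fin n → ℝ, dist v 0 < 1 / ((k : ℝ) + 1) ∧
      ((k : ℝ) + 1) * ‖fderiv ℝ f v‖ < |f v| := by
    intro k
    have h1 := hcon ((k : ℝ) + 1) (by positivity)
    have h2 : ∀ᶠ v : Fin n → ℝ in 𝓝 0, dist v 0 < 1 / ((k : ℝ) + 1) :=
      Metric.ball_mem_nhds _ (by positivity)
    obtain ⟨v, a, b⟩ := (h1.and_eventually h2).exists
    exact ⟨v, b, a⟩
  choose z hz1 hz2 using hex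
  have hz : Tendsto z atTop (𝓝 0) := by
    rw [tendsto_iff_dist_tendsto_zero]
    exact squeeze_zero (fun _ => dist_nonneg) (fun k => (hz1 k).le) tendsto_one_div_add_atTop_nhds_zero_nat
  have hz' : Tendsto z (hyperfilter ℕ : Filter ℕ) (𝓝 0) := hz.mono_left Nat.hyperfilter_le_atTop
  obtain ⟨m', -, w, φ, hw, hφ, hφ0, e, hZ⟩ := UU_all (𝓤 := hyperfilter ℕ) n z hz' f hf
  have hbound : ∀ᶠ v in 𝓝 0, |f (φ v)| ≤ 2 * ‖fderiv ℝ f (φ v)‖ := by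
    rcases hZ () with h | h
    · filter_upwards [h] with v hv
      rw [hv, abs_zero]; positivity
    · exact mono_bound hf hf0 hφ hφ0 h
  have h1 : ∀ᶠ k in (hyperfilter ℕ : Filter ℕ), 1 ≤ k :=
    (eventually_ge_atTop 1).filter_mono Nat.hyperfilter_le_atTop
  obtain ⟨k, a1, a2, a3⟩ := ((hw.eventually hbound).and (e.and h1)).exists
  rw [← a2] at a1
  have a4 := hz2 k
  have a5 : (1 : ℝ) ≤ k := by exact_mod_cast a3
  nlinarith [norm_nonneg (fderiv ℝ f (z k))]

lemma loj {n : ℕ} {f : EuclideanSpace ℝ (Fin n) → ℝ} {y₀ : EuclideanSpace ℝ (Fin n)}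
    (hf : AnalyticAt ℝ f y₀) (hf0 : f y₀ = 0) :
    ∃ C > 0, ∀ᶠ y in 𝓝 y₀, |f y| ≤ C * ‖fderiv ℝ f y‖ := by
  set L : (Fin n → ℝ) ≃L[ℝ] EuclideanSpace ℝ (Fin n) := (EuclideanSpace.equiv (Fin n) ℝ).symm with hL
  set ψ : (Fin n → ℝ) → EuclideanSpace ℝ (Fin n) := fun v => y₀ + L v with hψ
  have hψ0 : ψ 0 = y₀ := by simp [hψ]
  have hψa : AnalyticAt ℝ ψ 0 := analyticAt_const.add (L.analyticAt 0)
  obtain ⟨C, hC, h⟩ := loj_zero (f := fun v => f (ψ v)) (AnalyticAt.fun_comp_of_eq hf hψa hψ0)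
    (by rw [hψ0, hf0])
  set M := ‖(L : (Fin n → ℝ) →L[ℝ] EuclideanSpace ℝ (Fin n))‖ with hM
  refine ⟨C * (M + 1), by positivity, ?_⟩
  have ht : Tendsto (fun y => L.symm (y - y₀)) (𝓝 y₀) (𝓝 0) := by
    have : Continuous (fun y => L.symm (y - y₀)) := by fun_prop
    exact this.tendsto' _ _ (by simp)
  filter_upwards [ht.eventually h, hf.eventually_analyticAt] with y h1 h2
  have e1 : ψ (L.symm (y - y₀)) = y := by simp [hψ]
  have e2 : HasFDerivAt (fun v => f (ψ v))
      ((fderiv ℝ f y).comp (L : (Fin n → ℝ) →L[ℝ] EuclideanSpace ℝ (Fin n))) (L.symm (y - y₀)) := by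
    have h3 : HasFDerivAt ψ (L : (Fin n → ℝ) →L[ℝ] EuclideanSpace ℝ (Fin n)) (L.symm (y - y₀)) :=
      L.hasFDerivAt.const_add y₀
    have h4 : HasFDerivAt f (fderiv ℝ f y) (ψ (L.symm (y - y₀))) := by
      rw [e1]; exact h2.differentiableAt.hasFDerivAt
    exact h4.comp _ h3
  rw [e2.fderiv, e1] at h1
  refine h1.trans ?_
  rw [mul_assoc]
  refine mul_le_mul_of_nonneg_left ?_ hC.le
  refine (ContinuousLinearMap.opNorm_comp_le _ _).trans ?_
  nlinarith [norm_nonneg (fderiv ℝ f y)]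

lemma norm_le_sum_coord {n : ℕ} (T : EuclideanSpace ℝ (Fin n) →L[ℝ] ℝ) :
    ‖T‖ ≤ ∑ i, |T (EuclideanSpace.single i 1)| := by
  refine ContinuousLinearMap.opNorm_le_bound _ (Finset.sum_nonneg fun i _ => abs_nonneg _) fun v => ?_
  have h1 : T v = ∑ i, v i * T (EuclideanSpace.single i 1) := by
    conv_lhs => rw [← (EuclideanSpace.basisFun (Fin n) ℝ).sum_repr v]
    simp [map_sum]
  rw [h1, Real.norm_eq_abs, Finset.sum_mul]
  refine (Finset.abs_sum_le_sum_abs _ _).trans (Finset.sum_le_sum fun i _ => ?_)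
  rw [abs_mul, mul_comm]
  refine mul_le_mul_of_nonneg_left ?_ (abs_nonneg _)
  simpa using PiLp.norm_apply_le v i

lemma loj_hess {n : ℕ} {γ : EuclideanSpace ℝ (Fin n) → ℝ} {y₀ : EuclideanSpace ℝ (Fin n)}
    (hγ : AnalyticAt ℝ γ y₀) (h1 : fderiv ℝ γ y₀ = 0) :
    ∃ C > 0, ∀ᶠ y in 𝓝 y₀, ‖fderiv ℝ γ y‖ ≤ C * ‖iteratedFDeriv ℝ 2 γ y‖ := by
  have key : ∀ i : Fin n, ∃ C > 0, ∀ᶠ y in 𝓝 y₀,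
      |fderiv ℝ γ y (EuclideanSpace.single i 1)| ≤ C * ‖iteratedFDeriv ℝ 2 γ y‖ := by
    intro i
    set ev := ContinuousLinearMap.apply ℝ ℝ (EuclideanSpace.single i (1 : ℝ)) with hev
    have ha : AnalyticAt ℝ (fun y => ev (fderiv ℝ γ y)) y₀ :=
      (ev.analyticAt _).fun_comp hγ.fderiv
    obtain ⟨C, hC, h⟩ := loj ha (by simp [h1])
    refine ⟨C * (‖ev‖ + 1), by positivity, ?_⟩
    filter_upwards [h, hγ.fderiv.eventually_analyticAt] with y h2 h3
    have e1 : HasFDerivAt (fun y => ev (fderiv ℝ γ y)) (ev.comp (fderiv ℝ (fderiv ℝ γ) y)) y :=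
      ev.hasFDerivAt.comp y h3.differentiableAt.hasFDerivAt
    have e2 : ‖iteratedFDeriv ℝ 2 γ y‖ = ‖fderiv ℝ (fderiv ℝ γ) y‖ := by
      rw [← norm_iteratedFDeriv_fderiv, norm_iteratedFDeriv_one]
    rw [e1.fderiv] at h2
    refine h2.trans ?_
    rw [mul_assoc, e2]
    refine mul_le_mul_of_nonneg_left ?_ hC.le
    refine (ContinuousLinearMap.opNorm_comp_le _ _).trans ?_
    nlinarith [norm_nonneg (fderiv ℝ (fderiv ℝ γ) y)]
  choose C hC h using key
  refine ⟨∑ i, C i + 1, by have := Finset.sum_nonneg fun i (_ : i ∈ Finset.univ) => (hC i).le; linarith, ?_⟩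
  filter_upwards [eventually_all.2 h] with y hy
  refine (norm_le_sum_coord _).trans ((Finset.sum_le_sum fun i _ => hy i).trans ?_)
  rw [← Finset.sum_mul, add_mul]
  nlinarith [norm_nonneg (iteratedFDeriv ℝ 2 γ y)]

end Final

end Loj

/-- consequence of the Łojasiewicz inequality. Let `U ⊆ ℝ^{d-1}` be
open and `γ : U → ℝ` real-analytic with `γ(y₀) = 0` and `∇γ(y₀) = 0` at some `y₀ ∈ U`.
Then there are a neighborhood `V` of `y₀` and constants `C₁, C₂ > 0` with
`|γ(y)| ≤ C₁ |∇γ(y)|` and `|∇γ(y)| ≤ C₂ |D²γ(y)|` on `V`; in particular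
`|γ(y)| ≤ C₁C₂ |D²γ(y)|` on `V`. -/
theorem lojasiewicz_gradient_hessian
    (n : ℕ) (U : Set (EuclideanSpace ℝ (Fin n))) (hU : IsOpen U)
    (γ : EuclideanSpace ℝ (Fin n) → ℝ) (hγ : AnalyticOnNhd ℝ γ U)
    (y₀ : EuclideanSpace ℝ (Fin n)) (hy₀ : y₀ ∈ U)
    (h0 : γ y₀ = 0) (h1 : fderiv ℝ γ y₀ = 0) :
    ∃ V ∈ 𝓝 y₀, ∃ C₁ > (0 : ℝ), ∃ C₂ > (0 : ℝ), ∀ y ∈ V,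
      |γ y| ≤ C₁ * ‖fderiv ℝ γ y‖ ∧
      ‖fderiv ℝ γ y‖ ≤ C₂ * ‖iteratedFDeriv ℝ 2 γ y‖ ∧
      |γ y| ≤ C₁ * C₂ * ‖iteratedFDeriv ℝ 2 γ y‖ := by
  obtain ⟨C₁, hC₁, a1⟩ := Loj.loj (hγ y₀ hy₀) h0
  obtain ⟨C₂, hC₂, a2⟩ := Loj.loj_hess (hγ y₀ hy₀) h1
  refine ⟨_, Filter.inter_mem a1 a2, C₁, hC₁, C₂, hC₂, fun y hy => ?_⟩
  have b1 : |γ y| ≤ C₁ * ‖fderiv ℝ γ y‖ := hy.1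
  have b2 : ‖fderiv ℝ γ y‖ ≤ C₂ * ‖iteratedFDeriv ℝ 2 γ y‖ := hy.2
  refine ⟨b1, b2, b1.trans ?_⟩
  rw [mul_assoc]
  exact mul_le_mul_of_nonneg_left b2 hC₁.le
end
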